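/- arXiv:math/0001109 — 5 statements merged into one kernel-verified Lean document; each statement's English description precedes it below -/
import Mathlib

section
/- For any k, m ≥ 1, there are only finitely many convex lattice polytopes of dimension k containing exactly m lattice points in their interior, up to lattice isomorphism (affine maps x ↦ Ax + b with A ∈ GL_k(ℤ), b ∈ ℤ^k). -/
/-!
Translate the polytope so that an interior lattice point becomes `0`, and let `W` be its set of
vertices. Each `v ∈ W` is a vertex of a simplex with vertices in `W` that has `0` in its relative
interior. If some barycentric coordinate of `0` in this simplex were extremely small, then Dirichlet
approximation of these coordinates would produce a lattice point `w ≠ 0` with `(m + 1) • w` in the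
polytope, whose multiples `0, w, …, m • w` would be `m + 1` interior lattice points. Hence
`-(c • v)` lies in the polytope for a constant `c > 0` depending only on `k` and `m`.

The polytope therefore contains all small combinations of `k` linearly independent vertices, and
Blichfeldt's pigeonhole principle bounds the index of the lattice they span. The coordinates of the
other vertices are then bounded by Cramer's rule, while the integral matrices of a given nonzero
determinant form finitely many orbits under left multiplication by `SL(k, ℤ)`.
-/

open Set

noncomputable section

def latPts (k : ℕ) : Set (Fin k → ℝ) :=
  Set.range (fun v : Fin k → ℤ => fun i => (v i : ℝ))

def castZ {k : ℕ} (v : Fin k → ℤ) : Fin k → ℝ := fun i => (v i : ℝ)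

def IsLatticePolytope (k : ℕ) (P : Set (Fin k → ℝ)) : Prop :=
  ∃ V : Finset (Fin k → ℤ), P = convexHull ℝ (castZ '' (V : Set (Fin k → ℤ))) ∧
    (interior P).Nonempty

def LatEquiv (k : ℕ) (P Q : Set (Fin k → ℝ)) : Prop :=
  ∃ A B : Matrix (Fin k) (Fin k) ℤ, A * B = 1 ∧ B * A = 1 ∧
    ∃ b : Fin k → ℤ,
      Q = (fun x : Fin k → ℝ => fun i => (∑ j, (A i j : ℝ) * x j) + (b i : ℝ)) '' P

universe u

section Pigeonhole

variable {ι 𝕜 : Type*} [Field 𝕜] [LinearOrder 𝕜] [IsStrictOrderedRing 𝕜] [FloorRing 𝕜]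

lemma abs_fract_sub_fract_lt_of_floor_eq {N : ℕ} (hN : 0 < N) {x y : 𝕜}
    (h : ⌊Int.fract x * N⌋ = ⌊Int.fract y * N⌋) : |Int.fract x - Int.fract y| < 1 / N := by
  have hN' : (0 : 𝕜) < N := Nat.cast_pos.2 hN
  rw [lt_div_iff₀ hN']
  simpa only [← sub_mul, abs_mul, abs_of_pos hN'] using
    Int.abs_sub_lt_one_of_floor_eq_floor h

lemma exists_finset_abs_fract_sub_fract_lt {α : Type*} [Fintype α] [Fintype ι] {N m : ℕ}
    (hN : 0 < N) (x : α → ι → 𝕜) (hcard : N ^ Fintype.card ι * m < Fintype.card α) :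
    ∃ S : Finset α, m < S.card ∧
      ∀ a ∈ S, ∀ b ∈ S, ∀ i, |Int.fract (x a i) - Int.fract (x b i)| < 1 / N := by
  classical
  have hN' : (0 : 𝕜) < N := Nat.cast_pos.2 hN
  let cell (a : α) (i : ι) : ℤ := ⌊Int.fract (x a i) * N⌋
  let cells : Finset (ι → ℤ) := Fintype.piFinset fun _ ↦ Finset.Ico 0 N
  have cell_mem (a : α) (_ : a ∈ Finset.univ) : cell a ∈ cells := by
    simp only [cells, cell, Fintype.mem_piFinset, Finset.mem_Ico, Int.floor_nonneg, Int.floor_lt,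
      Int.cast_natCast]
    exact fun i ↦ ⟨mul_nonneg (Int.fract_nonneg _) hN'.le,
      mul_lt_of_lt_one_left hN' (Int.fract_lt_one _)⟩
  have card_cells : cells.card = N ^ Fintype.card ι := by simp [cells]
  obtain ⟨y, -, hy⟩ := Finset.exists_lt_card_fiber_of_mul_lt_card_of_maps_to cell_mem
    (by rwa [card_cells, Finset.card_univ])
  refine ⟨Finset.univ.filter (cell · = y), hy,
    fun a ha b hb i ↦ abs_fract_sub_fract_lt_of_floor_eq hN ?_⟩
  exact congrFun ((Finset.mem_filter.1 ha).2.trans (Finset.mem_filter.1 hb).2.symm) i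

/-- Dirichlet's theorem on simultaneous approximation. -/
lemma exists_abs_mul_sub_round_lt [Fintype ι] {N : ℕ} (hN : 0 < N) (a : ι → 𝕜) :
    ∃ q : ℕ, 0 < q ∧ q ≤ N ^ Fintype.card ι ∧ ∀ i, |q * a i - round (q * a i)| < 1 / N := by
  obtain ⟨S, hS, hSlt⟩ := exists_finset_abs_fract_sub_fract_lt (m := 1) hN
    (fun (t : Fin (N ^ Fintype.card ι + 1)) i ↦ (t : ℕ) * a i) (by simp)
  obtain ⟨s, t, hs, ht, hst⟩ : ∃ s t, s ∈ S ∧ t ∈ S ∧ s < t := by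
    obtain ⟨s, hs, t, ht, hne⟩ := Finset.one_lt_card.1 hS
    rcases hne.lt_or_gt with h | h
    exacts [⟨s, t, hs, ht, h⟩, ⟨t, s, ht, hs, h⟩]
  refine ⟨t - s, Nat.sub_pos_of_lt hst, by omega, fun i ↦ ?_⟩
  calc |((t - s : ℕ) : 𝕜) * a i - round (((t - s : ℕ) : 𝕜) * a i)|
      ≤ |((t - s : ℕ) : 𝕜) * a i - ((⌊(t : ℕ) * a i⌋ - ⌊(s : ℕ) * a i⌋ : ℤ) : 𝕜)| :=
        round_le _ _
    _ = |Int.fract ((t : ℕ) * a i) - Int.fract ((s : ℕ) * a i)| := by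
        rw [Nat.cast_sub (Fin.lt_def.1 hst).le, Int.fract, Int.fract]
        push_cast
        ring_nf
    _ < 1 / N := hSlt t ht s hs i

/-- Blichfeldt's pigeonhole principle: each class modulo `Λ` has a representative with coordinates
in `[0, 1)`, and differences of representatives in a common small cell have small coordinates. -/
lemma exists_finset_abs_map_lt {A : Type*} [AddCommGroup A] [Fintype ι] (φ : A →+ ι → 𝕜)
    {Λ : AddSubgroup A} (hΛ : ∀ z : ι → ℤ, ∃ a ∈ Λ, ∀ i, φ a i = z i) {N m : ℕ} (hN : 0 < N)
    (hcard : N ^ Fintype.card ι * m < Nat.card (A ⧸ Λ)) :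
    ∃ S : Finset A, m < S.card ∧ ∀ y ∈ S, ∀ i, |φ y i| < 1 / N := by
  classical
  have : Finite (A ⧸ Λ) := Nat.finite_of_card_ne_zero (by omega)
  let _ := Fintype.ofFinite (A ⧸ Λ)
  choose τ τ_mem map_τ using hΛ
  let rep (g : A ⧸ Λ) : A := g.out - τ fun i ↦ ⌊φ g.out i⌋
  have mk_rep (g : A ⧸ Λ) : (rep g : A ⧸ Λ) = g := by
    rw [QuotientAddGroup.mk_sub, (QuotientAddGroup.eq_zero_iff _).2 (τ_mem _), sub_zero,
      QuotientAddGroup.out_eq']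
  have map_rep (g : A ⧸ Λ) (i : ι) : φ (rep g) i = Int.fract (φ g.out i) := by
    rw [map_sub, Pi.sub_apply, map_τ, Int.fract]
  obtain ⟨S, hS, hSlt⟩ := exists_finset_abs_fract_sub_fract_lt (m := m) hN
    (fun g : A ⧸ Λ ↦ φ g.out) (by rwa [← Nat.card_eq_fintype_card (α := A ⧸ Λ)])
  obtain ⟨g₀, hg₀⟩ : S.Nonempty := Finset.card_pos.1 (by omega)
  have rep_injective : Function.Injective fun g ↦ rep g - rep g₀ :=
    sub_left_injective.comp (Function.LeftInverse.injective mk_rep)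
  refine ⟨S.image fun g ↦ rep g - rep g₀, by rwa [Finset.card_image_of_injective _ rep_injective],
    fun y hy i ↦ ?_⟩
  obtain ⟨g, hg, rfl⟩ := Finset.mem_image.1 hy
  rw [map_sub, Pi.sub_apply, map_rep, map_rep]
  exact hSlt g hg g₀ hg₀ i

end Pigeonhole

section Rigid

variable {ι : Type u} [Fintype ι] {a : ι → ℝ}

/-- Weights `a` of total mass `1` are `s`-rigid if the only integral `p` of total mass `q` for
which moving `a` by `s` times the error `q • a - p` keeps all weights nonnegative is `p = q • a`.
For the barycentric coordinates of `0` in a lattice simplex, the error vector describes a lattice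
point, and rigidity expresses that this point is `0`. -/
def IsRigid (s : ℕ) (a : ι → ℝ) : Prop :=
  ∀ (q : ℕ) (p : ι → ℤ), ∑ i, p i = q → (∀ i, 0 ≤ a i + s * (q * a i - p i)) →
    ∀ i, q * a i = p i

lemma sum_round_eq_of_abs_sub_lt {N q : ℕ} (hN : Fintype.card ι < N) (hsum : ∑ i, a i = 1)
    (h : ∀ i, |q * a i - round (q * a i)| < 1 / N) : ∑ i, round (q * a i) = q := by
  have hN' : (0 : ℝ) < N := Nat.cast_pos.2 (by omega)
  have hlt : |∑ i, (q * a i - round (q * a i))| < 1 := calc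
    _ ≤ ∑ i, |q * a i - round (q * a i)| := Finset.abs_sum_le_sum_abs _ _
    _ ≤ ∑ _i : ι, (1 / N : ℝ) := Finset.sum_le_sum fun i _ ↦ (h i).le
    _ = Fintype.card ι / N := by simp [div_eq_mul_inv]
    _ < 1 := (div_lt_one hN').2 (Nat.cast_lt.2 hN)
  rw [Finset.sum_sub_distrib, ← Finset.mul_sum, hsum, mul_one] at hlt
  have hlt' : |(q : ℤ) - ∑ i, round (q * a i)| < 1 := by exact_mod_cast hlt
  linarith [Int.abs_lt_one_iff.1 hlt']

/-- If every weight is either at least `c` or tiny, a Dirichlet denominator `q` rounds the tiny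
multiples `q * a i` to `0`, and `p = round (q • a)` contradicts rigidity unless no weight is
tiny. -/
lemma IsRigid.forall_le_of_gap {s N : ℕ} {c : ℝ} (hrigid : IsRigid s a) (hpos : ∀ i, 0 < a i)
    (hsum : ∑ i, a i = 1) (hN : Fintype.card ι < N) (hsN : s ≤ c * N)
    (hgap : ∀ i, c ≤ a i ∨ a i < 1 / (N : ℝ) ^ (Fintype.card ι + 1)) (i : ι) : c ≤ a i := by
  have hN2 : 2 ≤ N := Nat.lt_of_le_of_lt (Fintype.card_pos_iff.2 ⟨i⟩) hN
  have hN' : (0 : ℝ) < N := Nat.cast_pos.2 (by omega)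
  obtain ⟨q, hq, hqN, happrox⟩ := exists_abs_mul_sub_round_lt (N := N) (by omega) a
  have hq' : (0 : ℝ) < q := Nat.cast_pos.2 hq
  have round_eq_zero {j : ι} (hj : ¬ c ≤ a j) : round (q * a j) = 0 := by
    have hlt : q * a j < 1 / N := calc
      q * a j ≤ N ^ Fintype.card ι * a j := by
        gcongr
        · exact (hpos j).le
        · exact_mod_cast hqN
      _ < N ^ Fintype.card ι * (1 / N ^ (Fintype.card ι + 1)) := by
        gcongr
        exact (hgap j).resolve_left hj
      _ = 1 / N := by rw [pow_succ]; field_simp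
    have hhalf : 1 / (N : ℝ) ≤ 1 / 2 := by gcongr; exact_mod_cast hN2
    exact round_eq_zero_iff.2 ⟨by linarith [mul_pos hq' (hpos j)], hlt.trans_le hhalf⟩
  have perturbed_nonneg (j : ι) : 0 ≤ a j + s * (q * a j - round (q * a j)) := by
    have := hpos j
    by_cases hj : c ≤ a j
    · have herr : s * (1 / (N : ℝ)) ≤ c := by rwa [mul_one_div, div_le_iff₀ hN']
      have hmul := mul_le_mul_of_nonneg_left (abs_lt.1 (happrox j)).1.le (Nat.cast_nonneg s)
      linarith
    · rw [round_eq_zero hj, Int.cast_zero, sub_zero]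
      positivity
  by_contra hi
  have hzero := hrigid q _ (sum_round_eq_of_abs_sub_lt hN hsum happrox) perturbed_nonneg i
  rw [round_eq_zero hi, Int.cast_zero] at hzero
  exact (mul_pos hq' (hpos i)).ne' hzero

lemma IsRigid.exists_gap_scale (n s : ℕ) {c : ℝ} (hc : 0 < c) :
    ∃ c' ∈ Ioc 0 c, ∀ {ι : Type u} [Fintype ι] {a : ι → ℝ}, Fintype.card ι ≤ n →
      (∀ i, 0 < a i) → ∑ i, a i = 1 → IsRigid s a → (∀ i, c ≤ a i ∨ a i < c') →
      ∀ i, c ≤ a i := by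
  obtain ⟨N₀, hN₀⟩ := exists_nat_ge (s / c)
  let N := max N₀ (n + 1)
  have hnN : n + 1 ≤ N := le_max_right _ _
  have hN : (1 : ℝ) ≤ N := Nat.one_le_cast.2 (by omega)
  have hsN : s ≤ c * N := by
    rw [mul_comm, ← div_le_iff₀ hc]
    exact hN₀.trans (Nat.cast_le.2 (le_max_left _ _))
  refine ⟨min c (1 / N ^ (n + 1)), ⟨lt_min hc (by positivity), min_le_left _ _⟩,
    fun hcard hpos hsum hrigid hgap ↦ hrigid.forall_le_of_gap hpos hsum (N := N) (by omega)
      hsN fun i ↦ (hgap i).imp_right fun hi ↦ hi.trans_le ?_⟩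
  calc min c (1 / (N : ℝ) ^ (n + 1)) ≤ 1 / N ^ (n + 1) := min_le_right _ _
    _ ≤ _ := by gcongr

/-- Iterating `exists_gap_scale`, each interval between consecutive scales that is not a gap
contains one of the weights, of which there are at most `n`. -/
lemma IsRigid.exists_pos_forall_le (n s : ℕ) :
    ∃ c ∈ Ioc (0 : ℝ) 1, ∀ {ι : Type u} [Fintype ι] {a : ι → ℝ}, Fintype.card ι ≤ n →
      (∀ i, 0 < a i) → ∑ i, a i = 1 → IsRigid s a → ∀ i, c ≤ a i := by
  classical
  suffices ∀ r : ℕ, ∃ c ∈ Ioc (0 : ℝ) 1, ∀ {ι : Type u} [Fintype ι] {a : ι → ℝ},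
      Fintype.card ι ≤ n → (∀ i, 0 < a i) → ∑ i, a i = 1 → IsRigid s a →
      (∀ i, c ≤ a i) ∨ r ≤ Finset.card {i | c ≤ a i} by
    obtain ⟨c, hc, h⟩ := this (n + 1)
    refine ⟨c, hc, fun {ι} _ {a} hcard hpos hsum hrigid ↦ ?_⟩
    have := Finset.card_le_univ {i | c ≤ a i}
    exact (h hcard hpos hsum hrigid).resolve_right (by omega)
  intro r
  induction r with
  | zero => exact ⟨1, by simp, fun _ _ _ _ ↦ .inr (Nat.zero_le _)⟩
  | succ r ih =>
    obtain ⟨c, hc, ih⟩ := ih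
    obtain ⟨c', hc', hgap⟩ := exists_gap_scale n s hc.1
    refine ⟨c', ⟨hc'.1, hc'.2.trans hc.2⟩, fun {ι} _ {a} hcard hpos hsum hrigid ↦ ?_⟩
    by_cases h : ∀ i, c ≤ a i ∨ a i < c'
    · exact .inl fun i ↦ hc'.2.trans (hgap hcard hpos hsum hrigid h i)
    push Not at h
    obtain ⟨j, hjc, hjc'⟩ := h
    have hr : r ≤ Finset.card {i | c ≤ a i} :=
      (ih hcard hpos hsum hrigid).resolve_left fun h ↦ hjc.not_ge (h j)
    refine .inr (Nat.lt_of_le_of_lt hr (Finset.card_lt_card ?_))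
    refine Finset.ssubset_iff_of_subset (fun i hi ↦ ?_) |>.2 ⟨j, by simpa, by simpa⟩
    simp only [Finset.mem_filter_univ] at hi ⊢
    exact hc'.2.trans hi

end Rigid

section ConicCaratheodory

variable {ι 𝕜 E : Type*} [Field 𝕜] [LinearOrder 𝕜] [IsStrictOrderedRing 𝕜] [AddCommGroup E]
  [Module 𝕜 E] {v : ι → E} {s : Finset ι} {c : ι → 𝕜}

lemma exists_erase_sum_smul_eq [DecidableEq ι] (hc : ∀ i ∈ s, 0 < c i)
    (hdep : ¬ LinearIndepOn 𝕜 v (s : Set ι)) :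
    ∃ j ∈ s, ∃ d : ι → 𝕜, (∀ i ∈ s.erase j, 0 ≤ d i) ∧
      ∑ i ∈ s.erase j, d i • v i = ∑ i ∈ s, c i • v i := by
  obtain ⟨f, hf, i, hi, hfi⟩ : ∃ f : ι → 𝕜, ∑ i ∈ s, f i • v i = 0 ∧ ∃ i ∈ s, 0 < f i := by
    obtain ⟨f, hf, i, hi, hfi⟩ := not_linearIndepOn_finset_iff.1 hdep
    rcases hfi.lt_or_gt with hneg | hpos
    · exact ⟨-f, by simp [hf], i, hi, neg_pos.2 hneg⟩
    · exact ⟨f, hf, i, hi, hpos⟩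
  obtain ⟨j, hj, hmin⟩ := Finset.exists_min_image {i ∈ s | 0 < f i} (fun i ↦ c i / f i)
    ⟨i, Finset.mem_filter.2 ⟨hi, hfi⟩⟩
  obtain ⟨hjs, hfj⟩ := Finset.mem_filter.1 hj
  refine ⟨j, hjs, fun i ↦ c i - c j / f j * f i, fun i hi ↦ sub_nonneg.2 ?_, ?_⟩
  · have his := Finset.mem_of_mem_erase hi
    by_cases hfi : 0 < f i
    · exact (le_div_iff₀ hfi).1 (hmin i (Finset.mem_filter.2 ⟨his, hfi⟩))
    · exact (mul_nonpos_of_nonneg_of_nonpos (div_pos (hc j hjs) hfj).le (not_lt.1 hfi)).trans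
        (hc i his).le
  · rw [Finset.sum_erase _ (by simp [hfj.ne'])]
    simp only [sub_smul, mul_smul, Finset.sum_sub_distrib, ← Finset.smul_sum, hf, smul_zero,
      sub_zero]

lemma exists_linearIndepOn_sum_smul_eq (v : ι → E) (s : Finset ι) (hc : ∀ i ∈ s, 0 ≤ c i) :
    ∃ t ⊆ s, LinearIndepOn 𝕜 v (t : Set ι) ∧
      ∃ d : ι → 𝕜, (∀ i ∈ t, 0 < d i) ∧ ∑ i ∈ t, d i • v i = ∑ i ∈ s, c i • v i := by
  classical
  induction s using Finset.strongInduction generalizing c with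
  | H s ih =>
    by_cases hdone : (∀ i ∈ s, 0 < c i) ∧ LinearIndepOn 𝕜 v (s : Set ι)
    · exact ⟨s, subset_rfl, hdone.2, c, hdone.1, rfl⟩
    obtain ⟨j, hj, d, hd, hsum⟩ : ∃ j ∈ s, ∃ d : ι → 𝕜, (∀ i ∈ s.erase j, 0 ≤ d i) ∧
        ∑ i ∈ s.erase j, d i • v i = ∑ i ∈ s, c i • v i := by
      by_cases hpos : ∀ i ∈ s, 0 < c i
      · exact exists_erase_sum_smul_eq hpos fun hindep ↦ hdone ⟨hpos, hindep⟩
      · push Not at hpos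
        obtain ⟨j, hj, hcj⟩ := hpos
        exact ⟨j, hj, c, fun i hi ↦ hc i (Finset.mem_of_mem_erase hi),
          Finset.sum_erase _ (by simp [hcj.antisymm (hc j hj)])⟩
    obtain ⟨t, ht, htindep, e, he, hesum⟩ := ih _ (Finset.erase_ssubset hj) hd
    exact ⟨t, ht.trans (Finset.erase_subset _ _), htindep, e, he, hesum.trans hsum⟩

end ConicCaratheodory

section Simplex

section OrderedField

variable {ι 𝕜 E : Type*} [Field 𝕜] [LinearOrder 𝕜] [IsStrictOrderedRing 𝕜] [AddCommGroup E]
  [Module 𝕜 E]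

lemma affineIndependent_option_elim [Fintype ι] {v : E} {z : ι → E} {c : ι → 𝕜}
    (hz : LinearIndependent 𝕜 z) (hc : ∀ i, 0 ≤ c i) (hv : ∑ i, c i • z i = -v) :
    AffineIndependent 𝕜 fun o : Option ι ↦ o.elim v z := by
  refine (affineIndependent_iff_of_fintype 𝕜 _).2 fun w hw hwz ↦ ?_
  rw [Finset.weightedVSub_eq_linear_combination _ hw, Fintype.sum_option] at hwz
  rw [Fintype.sum_option] at hw
  have some_eq (i : ι) : w (some i) = w none * c i := by
    refine sub_eq_zero.1 (Fintype.linearIndependent_iff.1 hz (fun i ↦ w (some i) - w none * c i)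
      ?_ i)
    rw [← hwz]
    simp only [sub_smul, mul_smul, Finset.sum_sub_distrib, ← Finset.smul_sum, hv, Option.elim]
    rw [smul_neg, sub_neg_eq_add, add_comm]
  have none_eq : w none = 0 := by
    simp only [some_eq, ← Finset.mul_sum] at hw
    have hsum : 0 ≤ ∑ i, c i := Finset.sum_nonneg fun i _ ↦ hc i
    exact (mul_eq_zero.1 (show w none * (1 + ∑ i, c i) = 0 by linarith)).resolve_right
      (by positivity)
  rintro (_ | i)
  · exact none_eq
  · rw [some_eq, none_eq, zero_mul]

/-- Geometrically, `z` is a simplex with vertex `v` and with `0` in its relative interior. -/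
lemma exists_affineIndependent_sum_smul_eq_zero {κ : Type*} [Fintype κ] {W : Set E} {v : E}
    (hv : v ∈ W) {u : κ → E} (hu : ∀ i, u i ∈ W) {c : κ → 𝕜} (hc : ∀ i, 0 ≤ c i)
    (hsum : ∑ i, c i • u i = -v) :
    ∃ (t : Finset κ) (z : Option t → E) (a : Option t → 𝕜), z none = v ∧ (∀ i, z i ∈ W) ∧
      AffineIndependent 𝕜 z ∧ (∀ i, 0 < a i) ∧ ∑ i, a i = 1 ∧ ∑ i, a i • z i = 0 := by
  obtain ⟨t, -, hindep, d, hd, hdsum⟩ :=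
    exists_linearIndepOn_sum_smul_eq u Finset.univ fun i _ ↦ hc i
  rw [hsum, ← Finset.sum_coe_sort] at hdsum
  have hd' (i : t) : 0 < d i := hd i i.2
  have hmass : 0 < 1 + ∑ i : t, d i :=
    add_pos_of_pos_of_nonneg one_pos (Finset.sum_nonneg fun i _ ↦ (hd' i).le)
  refine ⟨t, fun o ↦ o.elim v (u ·), fun o ↦ (1 + ∑ i : t, d i)⁻¹ * o.elim 1 (d ·), rfl, ?_,
    affineIndependent_option_elim hindep (fun i ↦ (hd' i).le) hdsum, ?_, ?_, ?_⟩
  · rintro (_ | i)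
    exacts [hv, hu i]
  · rintro (_ | i)
    exacts [mul_pos (inv_pos.2 hmass) one_pos, mul_pos (inv_pos.2 hmass) (hd' i)]
  · rw [← Finset.mul_sum, Fintype.sum_option]
    exact inv_mul_cancel₀ hmass.ne'
  · simp only [mul_smul, ← Finset.smul_sum, Fintype.sum_option, Option.elim, one_smul, hdsum,
      add_neg_cancel, smul_zero]

lemma sum_smul_mem_of_sum_le_one {P : Set E} (hP : Convex 𝕜 P) (h0 : 0 ∈ P) {s : Finset ι}
    {a : ι → 𝕜} {z : ι → E} (ha : ∀ i ∈ s, 0 ≤ a i) (hsum : ∑ i ∈ s, a i ≤ 1)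
    (hz : ∀ i ∈ s, z i ∈ P) : ∑ i ∈ s, a i • z i ∈ P := by
  have hmem := hP.sum_mem (t := Finset.insertNone s) (w := fun o ↦ o.elim (1 - ∑ i ∈ s, a i) a)
    (z := fun o ↦ o.elim 0 z) (by simpa [Option.forall] using ⟨hsum, ha⟩) (by simp)
    (by simpa [Option.forall, h0] using hz)
  simpa using hmem

lemma sum_smul_mem_of_sum_abs_le {P : Set E} (hP : Convex 𝕜 P) (h0 : 0 ∈ P) {s : Finset ι}
    {a : ι → 𝕜} {c : 𝕜} (hc : 0 < c) {z : ι → E} (hsum : ∑ i ∈ s, |a i| ≤ c)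
    (hz : ∀ i ∈ s, c • z i ∈ P) (hz' : ∀ i ∈ s, -(c • z i) ∈ P) : ∑ i ∈ s, a i • z i ∈ P := by
  have hrw : ∑ i ∈ s, a i • z i = ∑ i ∈ s, (|a i| / c) • (SignType.sign (a i) : 𝕜) • c • z i :=
    Finset.sum_congr rfl fun i _ ↦ by
      rw [smul_smul, smul_smul, div_mul_eq_mul_div, div_mul_cancel₀ _ hc.ne', abs_mul_sign]
  rw [hrw]
  refine sum_smul_mem_of_sum_le_one hP h0 (fun i _ ↦ by positivity)
    (by rwa [← Finset.sum_div, div_le_one hc]) fun i hi ↦ ?_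
  rcases lt_trichotomy (a i) 0 with h | h | h
  · simpa [sign_neg h] using hz' i hi
  · simpa [h] using h0
  · simpa [sign_pos h] using hz i hi

end OrderedField

section Topology

variable {E : Type*} [AddCommGroup E] [Module ℝ E] [TopologicalSpace E] [ContinuousSMul ℝ E]
  {P : Set E}

lemma exists_pos_smul_mem_of_mem_interior (h0 : (0 : E) ∈ interior P) (x : E) :
    ∃ ε : ℝ, 0 < ε ∧ ε • x ∈ P := by
  have htendsto : Filter.Tendsto (fun ε : ℝ ↦ ε • x) (nhdsWithin 0 (Ioi 0)) (nhds 0) :=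
    ((continuous_id.smul continuous_const).tendsto' 0 0 (zero_smul ℝ x)).mono_left
      nhdsWithin_le_nhds
  have hmem := htendsto.eventually (mem_interior_iff_mem_nhds.1 h0)
  obtain ⟨ε, hε, hεmem⟩ := (eventually_mem_nhdsWithin.and hmem).exists
  exact ⟨ε, hε, hεmem⟩

variable [IsTopologicalAddGroup E]

lemma smul_mem_interior (hP : Convex ℝ P) (h0 : (0 : E) ∈ interior P) {x : E}
    (hx : x ∈ P) {t : ℝ} (ht : t ∈ Ico 0 1) : t • x ∈ interior P := by
  simpa using hP.combo_interior_self_mem_interior h0 hx (sub_pos.2 ht.2) ht.1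
    (sub_add_cancel 1 t)

lemma sum_smul_mem_interior_of_sum_abs_lt {ι : Type*} (hP : Convex ℝ P) (h0 : (0 : E) ∈ interior P)
    {s : Finset ι} {a : ι → ℝ} {c : ℝ} {z : ι → E} (hsum : ∑ i ∈ s, |a i| < c)
    (hz : ∀ i ∈ s, c • z i ∈ P) (hz' : ∀ i ∈ s, -(c • z i) ∈ P) :
    ∑ i ∈ s, a i • z i ∈ interior P := by
  obtain ⟨b, hsumb, hbc⟩ := exists_between hsum
  have hb : 0 < b := (Finset.sum_nonneg fun i _ ↦ abs_nonneg (a i)).trans_lt hsumb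
  have hc : 0 < c := hb.trans hbc
  have hmem : ∑ i ∈ s, (c / b * a i) • z i ∈ P := by
    refine sum_smul_mem_of_sum_abs_le hP (interior_subset h0) hc ?_ hz hz'
    simp only [abs_mul, abs_of_pos (div_pos hc hb), ← Finset.mul_sum]
    rw [div_mul_eq_mul_div, div_le_iff₀ hb]
    gcongr
  have hint := smul_mem_interior hP h0 hmem ⟨div_nonneg hb.le hc.le, (div_lt_one hc).2 hbc⟩
  have hcancel : b / c * (c / b) = 1 := by field_simp
  simpa only [Finset.smul_sum, smul_smul, ← mul_assoc, hcancel, one_mul] using hint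

end Topology

end Simplex

section Asymmetry

variable {E : Type*} [AddCommGroup E] [Module ℝ E] [TopologicalSpace E] [ContinuousSMul ℝ E]
  [IsTopologicalAddGroup E] {L : AddSubgroup E} {P : Set E} {m : ℕ}

lemma eq_zero_of_smul_mem (hP : Convex ℝ P) (h0 : (0 : E) ∈ interior P)
    (hcard : (interior P ∩ L).encard ≤ m) {w : E} (hwL : w ∈ L)
    (hw : ((m + 1 : ℕ) : ℝ) • w ∈ P) : w = 0 := by
  by_contra hne
  let multiple (j : Fin (m + 1)) : E := ((j : ℕ) : ℝ) • w
  have multiple_injective : Function.Injective multiple :=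
    (smul_left_injective ℝ hne).comp (Nat.cast_injective.comp Fin.val_injective)
  have multiple_mem : range multiple ⊆ interior P ∩ L := by
    rintro _ ⟨j, rfl⟩
    have hm : (0 : ℝ) < (m + 1 : ℕ) := by positivity
    have hj : ((j : ℕ) / (m + 1 : ℕ) : ℝ) ∈ Ico 0 1 :=
      ⟨by positivity, (div_lt_one hm).2 (Nat.cast_lt.2 j.2)⟩
    have hint := smul_mem_interior hP h0 hw hj
    rw [smul_smul, div_mul_cancel₀ _ hm.ne'] at hint
    refine ⟨hint, ?_⟩
    simpa only [multiple, Nat.cast_smul_eq_nsmul, SetLike.mem_coe] using L.nsmul_mem hwL j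
  have hle := (encard_le_encard multiple_mem).trans hcard
  rw [← image_univ, multiple_injective.encard_image, encard_univ, ENat.card_eq_coe_fintype_card,
    Fintype.card_fin, Nat.cast_le] at hle
  omega

lemma isRigid_of_affineIndependent {ι : Type*} [Fintype ι] {z : ι → E} {a : ι → ℝ}
    (hP : Convex ℝ P) (h0 : (0 : E) ∈ interior P) (hcard : (interior P ∩ L).encard ≤ m)
    (hz : AffineIndependent ℝ z) (hzL : ∀ i, z i ∈ L) (hzP : ∀ i, z i ∈ P)
    (hsum : ∑ i, a i = 1) (hzero : ∑ i, a i • z i = 0) : IsRigid (m + 1) a := by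
  intro q p hp hnonneg i
  have herr : ∑ i, (q * a i - p i) = 0 := by
    rw [Finset.sum_sub_distrib, ← Finset.mul_sum, hsum, ← Int.cast_sum, hp, mul_one,
      Int.cast_natCast, sub_self]
  let w : E := ∑ i, (q * a i - p i) • z i
  have hw : w = -∑ i, p i • z i := by
    simp only [w, sub_smul, mul_smul, Finset.sum_sub_distrib, ← Finset.smul_sum, hzero, smul_zero,
      zero_sub, Int.cast_smul_eq_zsmul]
  have hwL : w ∈ L := hw ▸ L.neg_mem (L.sum_mem fun i _ ↦ L.zsmul_mem (hzL i) _)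
  have hwP : ((m + 1 : ℕ) : ℝ) • w ∈ P := by
    have hmem := hP.sum_mem (t := Finset.univ) (fun i _ ↦ hnonneg i)
      (by rw [Finset.sum_add_distrib, ← Finset.mul_sum, herr, hsum, mul_zero, add_zero])
      (fun i _ ↦ hzP i)
    simpa only [add_smul, mul_smul, Finset.sum_add_distrib, ← Finset.smul_sum, hzero, zero_add]
      using hmem
  have hw0 := eq_zero_of_smul_mem hP h0 hcard hwL hwP
  exact sub_eq_zero.1 (affineIndependent_iff.1 hz Finset.univ _ herr hw0 i (Finset.mem_univ i))

variable (E) in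
lemma exists_neg_smul_mem_convexHull [FiniteDimensional ℝ E] (m : ℕ) :
    ∃ c ∈ Ioc (0 : ℝ) 1, ∀ {L : AddSubgroup E} {W : Set E}, W ⊆ L →
      (0 : E) ∈ interior (convexHull ℝ W) → (interior (convexHull ℝ W) ∩ L).encard ≤ m →
      ∀ v ∈ W, -(c • v) ∈ convexHull ℝ W := by
  obtain ⟨c, hc, hrigid⟩ := IsRigid.exists_pos_forall_le (Module.finrank ℝ E + 1) (m + 1)
  refine ⟨c, hc, fun {L W} hWL h0 hcard v hv ↦ ?_⟩
  have hconv : Convex ℝ (convexHull ℝ W) := convex_convexHull ℝ W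
  have hsub : W ⊆ convexHull ℝ W := subset_convexHull ℝ W
  obtain ⟨ε, hε, hεmem⟩ := exists_pos_smul_mem_of_mem_interior h0 (-v)
  obtain ⟨κ, _, b, u, hb, -, huW, hbu⟩ := mem_convexHull_iff_exists_fintype.1 hεmem
  obtain ⟨t, z, a, hzv, hzW, hindep, ha, hsum, hzero⟩ :=
    exists_affineIndependent_sum_smul_eq_zero hv huW (c := fun i ↦ ε⁻¹ * b i)
      (fun i ↦ mul_nonneg (inv_pos.2 hε).le (hb i))
      (by simp only [mul_smul, ← Finset.smul_sum, hbu, inv_smul_smul₀ hε.ne'])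
  have hcard_le : Fintype.card (Option t) ≤ Module.finrank ℝ E + 1 :=
    hindep.card_le_finrank_succ.trans (Nat.add_le_add_right (Submodule.finrank_le _) 1)
  have hca : c ≤ a none := hrigid hcard_le ha hsum (isRigid_of_affineIndependent hconv h0 hcard
    hindep (fun i ↦ hWL (hzW i)) (fun i ↦ hsub (hzW i)) hsum hzero) none
  rw [Fintype.sum_option] at hsum hzero
  have hopp : -(a none • v) ∈ convexHull ℝ W := by
    rw [← hzv, neg_eq_of_add_eq_zero_right hzero]
    exact sum_smul_mem_of_sum_le_one hconv (interior_subset h0) (fun i _ ↦ (ha _).le)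
      (by linarith [ha none]) fun i _ ↦ hsub (hzW _)
  have hscaled := hconv.smul_mem_of_zero_mem (interior_subset h0) hopp
    ⟨div_nonneg hc.1.le (ha none).le, (div_le_one (ha none)).2 hca⟩
  rwa [smul_neg, smul_smul, div_mul_cancel₀ _ (ha none).ne'] at hscaled

end Asymmetry

section DeterminantBound

variable {k : ℕ}

/-- `castZ` as a group homomorphism; its range is the lattice `latPts k`. -/
def castZHom (k : ℕ) : (Fin k → ℤ) →+ (Fin k → ℝ) :=
  (Int.castAddHom ℝ).compLeft (Fin k)

lemma castZHom_apply (u : Fin k → ℤ) : castZHom k u = castZ u := rfl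

lemma castZ_injective : Function.Injective (castZ (k := k)) := fun _ _ h ↦
  funext fun i ↦ Int.cast_injective (congrFun h i)

lemma castZ_mulVec {l : ℕ} (B : Matrix (Fin k) (Fin l) ℤ) (u : Fin l → ℤ) :
    castZ (B.mulVec u) = (B.map (Int.castRingHom ℝ)).mulVec (castZ u) :=
  funext fun i ↦ RingHom.map_mulVec (Int.castRingHom ℝ) B u i

/-- The convex hull in `ℝ^k` of a set of integral points. -/
def latticeHull (W : Set (Fin k → ℤ)) : Set (Fin k → ℝ) :=
  convexHull ℝ (castZ '' W)

lemma card_quotient_range_mulVecLin {n : Type*} [Fintype n] [DecidableEq n] {B : Matrix n n ℤ}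
    (hB : B.det ≠ 0) :
    Nat.card ((n → ℤ) ⧸ LinearMap.range B.mulVecLin) = B.det.natAbs := by
  have hinj : Function.Injective B.mulVecLin :=
    (injective_iff_map_eq_zero _).2 fun _ ↦ Matrix.eq_zero_of_mulVec_eq_zero hB
  rw [← Submodule.natAbs_det_equiv _ (LinearEquiv.ofInjective B.mulVecLin hinj),
    ← LinearMap.det_toLin']
  rfl

lemma exists_finset_castZ_eq_sum {N m : ℕ} (hN : 0 < N) {B : Matrix (Fin k) (Fin k) ℤ}
    (hB : B.det ≠ 0) (hm : N ^ k * m < B.det.natAbs) :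
    ∃ S : Finset (Fin k → ℤ), m < S.card ∧ ∀ y ∈ S, ∃ t : Fin k → ℝ, (∀ j, |t j| < 1 / N) ∧
      castZ y = ∑ j, t j • castZ (B.col j) := by
  let R : Matrix (Fin k) (Fin k) ℝ := B.map (Int.castRingHom ℝ)
  have hR : IsUnit R.det := by
    rw [isUnit_iff_ne_zero]
    exact ((Int.castRingHom ℝ).map_det B).symm.trans_ne (Int.cast_ne_zero.2 hB)
  let coord : (Fin k → ℤ) →+ (Fin k → ℝ) := R⁻¹.mulVecLin.toAddMonoidHom.comp (castZHom k)
  have coord_apply (y : Fin k → ℤ) : coord y = R⁻¹.mulVec (castZ y) := rfl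
  have coord_mulVec (z : Fin k → ℤ) : coord (B.mulVec z) = castZ z := by
    rw [coord_apply, castZ_mulVec, Matrix.mulVec_mulVec, Matrix.nonsing_inv_mul _ hR,
      Matrix.one_mulVec]
  obtain ⟨S, hS, hSlt⟩ := exists_finset_abs_map_lt coord (m := m)
    (Λ := (LinearMap.range B.mulVecLin).toAddSubgroup)
    (fun z ↦ ⟨B.mulVec z, ⟨z, rfl⟩, congrFun (coord_mulVec z)⟩) hN
    (by rw [Fintype.card_fin]; exact hm.trans_eq (card_quotient_range_mulVecLin hB).symm)
  refine ⟨S, hS, fun y hy ↦ ⟨coord y, hSlt y hy, ?_⟩⟩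
  calc castZ y = R.mulVec (coord y) := by
        rw [coord_apply, Matrix.mulVec_mulVec, Matrix.mul_nonsing_inv _ hR, Matrix.one_mulVec]
    _ = ∑ j, coord y j • castZ (B.col j) := by
        simp only [Matrix.mulVec_eq_sum, op_smul_eq_smul]
        rfl

lemma card_le_of_forall_castZ_mem {P : Set (Fin k → ℝ)} {m : ℕ}
    (hcard : (P ∩ latPts k).encard ≤ m) {S : Finset (Fin k → ℤ)} (hS : ∀ y ∈ S, castZ y ∈ P) :
    S.card ≤ m := by
  have hsub : castZ '' (S : Set (Fin k → ℤ)) ⊆ P ∩ latPts k := by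
    rintro _ ⟨y, hy, rfl⟩
    exact ⟨hS y hy, y, rfl⟩
  have hle := (encard_le_encard hsub).trans hcard
  rwa [castZ_injective.encard_image, encard_coe_eq_coe_finsetCard, Nat.cast_le] at hle

lemma exists_natAbs_det_le (k m : ℕ) :
    ∃ M : ℕ, ∀ W : Set (Fin k → ℤ), (0 : Fin k → ℝ) ∈ interior (latticeHull W) →
      (interior (latticeHull W) ∩ latPts k).encard ≤ m →
      ∀ B : Matrix (Fin k) (Fin k) ℤ, (∀ j, B.col j ∈ W) → B.det.natAbs ≤ M := by
  obtain ⟨c, hc, hneg⟩ := exists_neg_smul_mem_convexHull (Fin k → ℝ) m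
  obtain ⟨N, hN⟩ := exists_nat_gt (k / c)
  have hN' : (0 : ℝ) < N := (div_nonneg k.cast_nonneg hc.1.le).trans_lt hN
  refine ⟨N ^ k * m, fun W h0 hcard B hcol ↦ ?_⟩
  by_contra! hdet
  have hB : B.det ≠ 0 := Int.natAbs_pos.1 (by omega)
  have hsubset : castZ '' W ⊆ (castZHom k).range := by
    rintro _ ⟨u, -, rfl⟩
    exact ⟨u, rfl⟩
  have hconv : Convex ℝ (latticeHull W) := convex_convexHull ℝ _
  have hcol' (j : Fin k) : castZ (B.col j) ∈ castZ '' W := mem_image_of_mem _ (hcol j)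
  obtain ⟨S, hS, hSeq⟩ := exists_finset_castZ_eq_sum (Nat.cast_pos.1 hN') hB hdet
  refine hS.not_ge (card_le_of_forall_castZ_mem hcard fun y hy ↦ ?_)
  obtain ⟨t, ht, hyt⟩ := hSeq y hy
  rw [hyt]
  refine sum_smul_mem_interior_of_sum_abs_lt hconv h0 ?_
    (fun j _ ↦ hconv.smul_mem_of_zero_mem (interior_subset h0)
      (subset_convexHull ℝ _ (hcol' j)) (Ioc_subset_Icc_self hc))
    (fun j _ ↦ hneg hsubset h0 hcard _ (hcol' j))
  calc ∑ j, |t j| ≤ ∑ _j : Fin k, (1 / N : ℝ) := Finset.sum_le_sum fun j _ ↦ (ht j).le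
    _ = k / N := by simp [div_eq_mul_inv]
    _ < c := (div_lt_comm₀ hc.1 hN').1 hN

end DeterminantBound

section NormalForm

variable {k : ℕ} {n : Type*} [Fintype n] [DecidableEq n] {R : Type*} [CommRing R]

lemma exists_matrix_col_mem_det_ne_zero {W : Set (Fin k → ℤ)}
    (hW : (interior (latticeHull W)).Nonempty) :
    ∃ B : Matrix (Fin k) (Fin k) ℤ, (∀ j, B.col j ∈ W) ∧ B.det ≠ 0 := by
  have hspan : Submodule.span ℝ (castZ '' W) = ⊤ :=
    Submodule.eq_top_of_nonempty_interior' _ <| hW.mono <| interior_mono <|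
      convexHull_min Submodule.subset_span (Submodule.convex _)
  have hrank : Module.finrank ℝ (Submodule.span ℝ (castZ '' W)) = k := by
    rw [hspan, finrank_top, Module.finrank_fin_fun]
  obtain ⟨f, hf, -, hli⟩ := Submodule.exists_fun_fin_finrank_span_eq ℝ (castZ '' W)
  choose u hu huf using hf
  let e : Fin k ≃ Fin (Module.finrank ℝ (Submodule.span ℝ (castZ '' W))) := finCongr hrank.symm
  let B : Matrix (Fin k) (Fin k) ℤ := Matrix.of fun i j ↦ u (e j) i
  have hcol : (B.map (Int.castRingHom ℝ)).col = f ∘ e := funext fun j ↦ huf (e j)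
  have hunit : IsUnit (B.map (Int.castRingHom ℝ)) := by
    rw [← Matrix.linearIndependent_cols_iff_isUnit, hcol]
    exact hli.comp e e.injective
  refine ⟨B, fun j ↦ hu (e j), fun hdet ↦ ((Matrix.isUnit_iff_isUnit_det _).1 hunit).ne_zero ?_⟩
  exact ((Int.castRingHom ℝ).map_det B).symm.trans (by rw [hdet, map_zero])

/-- By Cramer's rule, the coordinates in the basis of columns of `B`, scaled by `B.det`, are
determinants of matrices whose columns again lie in `W`. -/
lemma exists_forall_abs_cramer_le (k m : ℕ) :
    ∃ M : ℕ, ∀ W : Set (Fin k → ℤ), (0 : Fin k → ℝ) ∈ interior (latticeHull W) →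
      (interior (latticeHull W) ∩ latPts k).encard ≤ m →
      ∃ B : Matrix (Fin k) (Fin k) ℤ, B.det ≠ 0 ∧ |B.det| ≤ M ∧
        ∀ u ∈ W, ∀ i, |B.cramer u i| ≤ M := by
  obtain ⟨M, hM⟩ := exists_natAbs_det_le k m
  refine ⟨M, fun W h0 hcard ↦ ?_⟩
  obtain ⟨B, hcol, hdet⟩ := exists_matrix_col_mem_det_ne_zero ⟨0, h0⟩
  have abs_det_le {A : Matrix (Fin k) (Fin k) ℤ} (hA : ∀ j, A.col j ∈ W) : |A.det| ≤ M := by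
    rw [Int.abs_eq_natAbs]
    exact Nat.cast_le.2 (hM W h0 hcard A hA)
  refine ⟨B, hdet, abs_det_le hcol, fun u hu i ↦ ?_⟩
  rw [Matrix.cramer_apply]
  refine abs_det_le fun j ↦ ?_
  rcases eq_or_ne j i with rfl | hj
  · rwa [show (B.updateCol j u).col j = u from funext fun _ ↦ Matrix.updateCol_self]
  · rw [show (B.updateCol i u).col j = B.col j from funext fun _ ↦ Matrix.updateCol_ne hj]
    exact hcol j

lemma cramer_mul_mulVec (A B : Matrix n n R) (u : n → R) :
    (A * B).cramer (A.mulVec u) = A.det • B.cramer u := by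
  rw [Matrix.cramer_eq_adjugate_mulVec, Matrix.cramer_eq_adjugate_mulVec,
    Matrix.adjugate_mul_distrib, Matrix.mulVec_mulVec, Matrix.mul_assoc, Matrix.adjugate_mul,
    Matrix.mul_smul, Matrix.mul_one, Matrix.smul_mulVec]

lemma exists_specialLinearGroup_mul_eq [IsDomain R] {B B' : Matrix n n R} (hB : B.det ≠ 0)
    (hdet : B'.det = B.det) (hdvd : ∀ i j, B.det ∣ B' i j - B i j) :
    ∃ U : Matrix.SpecialLinearGroup n R, (U : Matrix n n R) * B = B' := by
  choose C hC using hdvd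
  let U : Matrix n n R := 1 + Matrix.of C * B.adjugate
  have hU : U * B = B' := by
    rw [add_mul, one_mul, Matrix.mul_assoc, Matrix.adjugate_mul, Matrix.mul_smul, Matrix.mul_one,
      ← eq_sub_iff_add_eq']
    ext i j
    exact (hC i j).symm
  refine ⟨⟨U, mul_right_cancel₀ hB ?_⟩, hU⟩
  rw [← Matrix.det_mul, hU, hdet, one_mul]

lemma finite_orbitRel_quotient_fixedDetMatrix {d : ℤ} (hd : d ≠ 0) :
    Finite (MulAction.orbitRel.Quotient (Matrix.SpecialLinearGroup n ℤ)
      (FixedDetMatrix n ℤ d)) := by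
  have : NeZero d.natAbs := ⟨Int.natAbs_ne_zero.2 hd⟩
  refine Finite.of_injective (β := Matrix n n (ZMod d.natAbs))
    (fun q ↦ q.out.1.map (Int.castRingHom _)) fun q q' hqq' ↦ ?_
  obtain ⟨U, hU⟩ := exists_specialLinearGroup_mul_eq (B := q'.out.1) (B' := q.out.1)
    (by rwa [q'.out.2]) (q.out.2.trans q'.out.2.symm) fun i j ↦ by
      rw [q'.out.2, ← Int.natAbs_dvd, ← ZMod.intCast_eq_intCast_iff_dvd_sub]
      exact (congrFun₂ hqq' i j).symm
  rw [← q.out_eq, ← q'.out_eq]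
  exact Quotient.sound ⟨U, FixedDetMatrices.ext' _ _ hU⟩

lemma finite_setOf_abs_cramer_le {B : Matrix n n ℤ} (hB : B.det ≠ 0) (M : ℕ) :
    {u : n → ℤ | ∀ i, |B.cramer u i| ≤ M}.Finite := by
  have hinj : Function.Injective B.cramer := fun u v huv ↦ smul_right_injective _ hB <| by
    simpa only [Matrix.mulVec_cramer] using congrArg B.mulVec huv
  have hbox : {x : n → ℤ | ∀ i, |x i| ≤ M}.Finite :=
    (finite_Icc (fun _ : n ↦ -(M : ℤ)) (fun _ ↦ (M : ℤ))).subset fun x hx ↦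
      ⟨fun i ↦ (abs_le.1 (hx i)).1, fun i ↦ (abs_le.1 (hx i)).2⟩
  exact hbox.preimage hinj.injOn

lemma exists_finite_forall_mulVec_mem (n : Type*) [Fintype n] [DecidableEq n] (M : ℕ) :
    ∃ X : Set (n → ℤ), X.Finite ∧ ∀ B : Matrix n n ℤ, B.det ≠ 0 → |B.det| ≤ M →
      ∃ U : Matrix.SpecialLinearGroup n ℤ,
        ∀ u, (∀ i, |B.cramer u i| ≤ M) → (U : Matrix n n ℤ).mulVec u ∈ X := by
  let D : Set ℤ := {d | d ≠ 0 ∧ |d| ≤ M}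
  have hD : D.Finite := (finite_Icc (-(M : ℤ)) M).subset fun d hd ↦ abs_le.1 hd.2
  refine ⟨⋃ d ∈ D, ⋃ q : MulAction.orbitRel.Quotient (Matrix.SpecialLinearGroup n ℤ)
    (FixedDetMatrix n ℤ d), {x | ∀ i, |q.out.1.cramer x i| ≤ M}, hD.biUnion fun d hd ↦ ?_,
    fun B hB hBM ↦ ?_⟩
  · have := finite_orbitRel_quotient_fixedDetMatrix (n := n) hd.1
    exact finite_iUnion fun q ↦ finite_setOf_abs_cramer_le (by rw [q.out.2]; exact hd.1) M
  · let B₀ : FixedDetMatrix n ℤ B.det := ⟨B, rfl⟩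
    obtain ⟨U, hU⟩ := Quotient.mk_out
      (s := MulAction.orbitRel (Matrix.SpecialLinearGroup n ℤ) (FixedDetMatrix n ℤ B.det)) B₀
    refine ⟨U, fun u hu ↦ mem_biUnion (show B.det ∈ D from ⟨hB, hBM⟩)
      (mem_iUnion.2 ⟨Quotient.mk _ B₀, fun i ↦ ?_⟩)⟩
    rw [← hU, FixedDetMatrices.smul_coe, cramer_mul_mulVec, U.det_coe, one_smul]
    exact hu i

end NormalForm

section LatticeEquivalence

open scoped Pointwise

variable {k : ℕ}

lemma latEquiv_latticeHull_image (U : Matrix.SpecialLinearGroup (Fin k) ℤ) (b : Fin k → ℤ)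
    (W : Set (Fin k → ℤ)) :
    LatEquiv k (latticeHull W)
      (latticeHull ((fun u ↦ (U : Matrix (Fin k) (Fin k) ℤ).mulVec u + b) '' W)) := by
  let A : Matrix (Fin k) (Fin k) ℤ := U
  let f : (Fin k → ℝ) →ᵃ[ℝ] (Fin k → ℝ) :=
    (A.map (Int.castRingHom ℝ)).mulVecLin.toAffineMap + AffineMap.const ℝ _ (castZ b)
  have hf (u : Fin k → ℤ) : castZ (A.mulVec u + b) = f (castZ u) := by
    rw [← castZHom_apply, map_add, castZHom_apply, castZ_mulVec]
    rfl
  refine ⟨A, A.adjugate, by rw [Matrix.mul_adjugate, U.det_coe, one_smul],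
    by rw [Matrix.adjugate_mul, U.det_coe, one_smul], b, ?_⟩
  calc latticeHull ((fun u ↦ A.mulVec u + b) '' W) = f '' latticeHull W := by
        rw [latticeHull, latticeHull, AffineMap.image_convexHull, image_image, image_image]
        simp only [hf]
    _ = _ := rfl

lemma latticeHull_vadd (b : Fin k → ℤ) (W : Set (Fin k → ℤ)) :
    latticeHull (b +ᵥ W) = castZ b +ᵥ latticeHull W := by
  rw [latticeHull, latticeHull, ← convexHull_vadd]
  exact congrArg _ (image_vadd_distrib (castZHom k) b W)

lemma castZ_vadd_latPts (b : Fin k → ℤ) : castZ b +ᵥ latPts k = latPts k :=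
  vadd_coe_set (s := (castZHom k).range) ⟨b, rfl⟩

lemma exists_finite_forall_latEquiv (k m : ℕ) :
    ∃ X : Set (Fin k → ℤ), X.Finite ∧ ∀ W : Set (Fin k → ℤ),
      (interior (latticeHull W) ∩ latPts k).Nonempty →
      (interior (latticeHull W) ∩ latPts k).encard ≤ m →
      ∃ Y ⊆ X, LatEquiv k (latticeHull W) (latticeHull Y) := by
  obtain ⟨M, hM⟩ := exists_forall_abs_cramer_le k m
  obtain ⟨X, hX, hU⟩ := exists_finite_forall_mulVec_mem (Fin k) M
  refine ⟨X, hX, fun W hne hcard ↦ ?_⟩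
  obtain ⟨_, hb, b, rfl⟩ := hne
  have hint : interior (latticeHull (-b +ᵥ W)) = castZ (-b) +ᵥ interior (latticeHull W) := by
    rw [latticeHull_vadd, interior_vadd]
  obtain ⟨B, hB, hBM, hcramer⟩ := hM (-b +ᵥ W)
    (by
      rw [hint]
      exact ⟨castZ b, hb, by simp [← castZHom_apply]⟩)
    (by rwa [hint, ← castZ_vadd_latPts (-b), ← vadd_set_inter, encard_vadd_set])
  obtain ⟨U, hUX⟩ := hU B hB hBM
  refine ⟨_, ?_, latEquiv_latticeHull_image U ((U : Matrix (Fin k) (Fin k) ℤ).mulVec (-b)) W⟩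
  rintro _ ⟨u, hu, rfl⟩
  simpa only [vadd_eq_add, add_comm (-b), Matrix.mulVec_add] using
    hUX _ (hcramer _ (vadd_mem_vadd_set hu))

end LatticeEquivalence

/-- For any `k, m ≥ 1` there are only finitely many convex lattice polytopes of
dimension `k` with exactly `m` interior lattice points, up to lattice isomorphism. -/
theorem finitely_many_polytopes_with_m_interior_points (k m : ℕ) (hk : 1 ≤ k) (hm : 1 ≤ m) :
    ∃ (n : ℕ) (reps : Fin n → Set (Fin k → ℝ)),
      ∀ P : Set (Fin k → ℝ), IsLatticePolytope k P →
        (interior P ∩ latPts k).ncard = m →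
        ∃ i, LatEquiv k P (reps i) := by
  obtain ⟨X, hX, hW⟩ := exists_finite_forall_latEquiv k m
  have : Finite {Y // Y ⊆ X} := hX.finite_subsets
  obtain ⟨n, ⟨e⟩⟩ := Finite.exists_equiv_fin {Y // Y ⊆ X}
  refine ⟨n, fun i ↦ latticeHull (e.symm i : Set (Fin k → ℤ)), ?_⟩
  rintro P ⟨V, hP, -⟩ hcard
  obtain rfl : P = latticeHull V := hP
  obtain ⟨Y, hY, hequiv⟩ := hW V (nonempty_of_ncard_ne_zero (by omega))
    (by rw [← (finite_of_ncard_pos (by omega)).cast_ncard_eq, hcard])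
  exact ⟨e ⟨Y, hY⟩, by simpa only [e.symm_apply_apply] using hequiv⟩
end
end

section
/- Every lattice-free tetrahedron in ℝ^3 has lattice width 1 (White's theorem): if T is a tetrahedron with vertices in ℤ^3 containing no lattice points other than its four vertices, then there is a linear functional φ with integer coefficients taking exactly two values on the vertices of T, differing by 1. -/
open Set

noncomputable section

/-!
The barycentric coordinates of a lattice vector sum to `0`, so their fractional parts sum to an
integer. In a lattice-free tetrahedron that sum is never `1`, and comparing a vector with its
negative forces either four integral coordinates or four nonintegral ones with fractional parts of
sum `2`. Hence one coordinate determines the others modulo `1`: the quotient of `ℤ^3` by the lattice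
of edge vectors is cyclic of some order `n`, generated by a vector with coordinates `u j / n`, and
every multiple of `u` nonzero modulo `n` has residues of sum `2 * n`. The terminal lemma, an
argument on floor functions, extracts two weights with `u i + u j` divisible by `n`. The sum of
these two barycentric coordinates is then an integral affine functional, with value `1` at two
vertices and `0` at the other two.
-/

/-! ### Terminal quadruples -/

/-- The functions `k ↦ ⌊k b / n⌋` and `k ↦ ⌊k c / n⌋` add up to `k ↦ ⌊k m / n⌋` on `0 < k < n`:
the shape taken by the terminal condition once two of the four weights are paired off. -/
def FloorAdditive (n b c m : ℤ) : Prop :=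
  ∀ k, 0 < k → k < n → k * b / n + k * c / n = k * m / n

/-- The arithmetic condition that makes the cyclic quotient of weights `u` modulo `n` terminal:
every nonzero multiple of `u` has four nonzero residues modulo `n`, which sum to `2 * n`. -/
def IsTerminalQuadruple (n : ℤ) (u : Fin 4 → ℤ) : Prop :=
  ∀ k, ¬ n ∣ k → (∀ j, ¬ n ∣ k * u j) ∧ ∑ j, k * u j % n = 2 * n

theorem add_two_lt_of_mul_ediv_lt {n m k : ℤ} (hn : 0 < n) (h2m : 2 * m < n)
    (hkn : k + 1 < n) (hjump : k * m / n < (k + 1) * m / n) : k + 2 < n := by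
  have hlt : k * m < (k * m / n + 1) * n := Int.lt_ediv_add_one_mul_self _ hn
  have hle : (k * m / n + 1) * n ≤ (k + 1) * m := (Int.le_ediv_iff_mul_le hn).1 hjump
  by_contra! hlast
  obtain rfl : k = n - 2 := by omega
  have hm_lt : m < (n - 2) * m / n + 2 := by nlinarith
  have hlt_m : (n - 2) * m / n + 1 < m := by nlinarith
  omega

namespace FloorAdditive

variable {n b c m : ℤ}

theorem symm (h : FloorAdditive n b c m) : FloorAdditive n c b m := fun k hk hkn => by
  rw [add_comm, h k hk hkn]

theorem mul_ediv_eq (h : FloorAdditive n b c m) (hc : 0 ≤ c) {k : ℤ} (hk : 0 < k) (hkn : k < n)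
    (hkc : k * c < n) : k * b / n = k * m / n := by
  rw [← h k hk hkn, Int.ediv_eq_zero_of_lt (by positivity) hkc, add_zero]

/-- If `k ↦ ⌊k c / n⌋` jumped at `k + 1`, so would `k ↦ ⌊k m / n⌋`. Going `q - 1` steps back and
then `q` steps forward, `k ↦ ⌊k b / n⌋` has also jumped by `k + 2`, and the two jumps together
exceed what `2 * m < n` leaves room for. -/
theorem succ_mul_lt (h : FloorAdditive n b c m) {q k : ℤ} (hq : 1 < q) (hqm : (q - 1) * m < n)
    (hqb : n ≤ q * b) (hm : 0 < m) (h2m : 2 * m < n) (hk : 0 < k) (hkn : k + 1 < n)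
    (hkc : k * c < n) : (k + 1) * c < n := by
  by_contra! hjump
  have hn : 0 < n := by linarith
  have hb : 0 < b := by nlinarith
  have hc : 0 < c := by nlinarith
  set j := k * m / n
  have hkb : k * b / n = j := h.mul_ediv_eq hc.le hk (by linarith) hkc
  have hkc_succ : 1 ≤ (k + 1) * c / n := by rw [Int.le_ediv_iff_mul_le hn]; linarith
  have hkm_succ : j + 1 ≤ (k + 1) * m / n := by
    have hmono : k * b / n ≤ (k + 1) * b / n := Int.ediv_le_ediv hn (by linarith)
    linarith [h (k + 1) (by linarith) hkn]
  have hk2 : k + 2 < n := add_two_lt_of_mul_ediv_lt hn h2m hkn (by omega)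
  rw [Int.le_ediv_iff_mul_le hn] at hkm_succ
  have hj0 : 0 ≤ j := Int.ediv_nonneg (by positivity) hn.le
  have hqk : q ≤ k + 1 := by
    by_contra! hkq
    nlinarith
  have hback : j ≤ (k + 2 - q) * b / n := by
    rw [h.mul_ediv_eq hc.le (by linarith) (by linarith) (by nlinarith),
      Int.le_ediv_iff_mul_le hn]
    linarith
  have hk2b : j + 1 ≤ (k + 2) * b / n := by
    rw [Int.le_ediv_iff_mul_le hn] at hback ⊢
    linarith
  have hk2c : 1 ≤ (k + 2) * c / n := by rw [Int.le_ediv_iff_mul_le hn]; linarith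
  have hk2m : (k + 2) * m / n < j + 2 := by
    rw [Int.ediv_lt_iff_lt_mul hn]
    have hkm : k * m < (j + 1) * n := Int.lt_ediv_add_one_mul_self _ hn
    linarith
  linarith [h (k + 2) (by linarith) hk2]

theorem right_eq_one (h : FloorAdditive n b c m) {q : ℤ} (hq : 1 < q) (hqm : (q - 1) * m < n)
    (hqb : n ≤ q * b) (hm : 0 < m) (h2m : 2 * m < n) (hc : 0 < c) (hcn : c < n) : c = 1 := by
  have hlt : ∀ k, 1 ≤ k → k < n → k * c < n := by
    intro k hk
    induction k, hk using Int.leInduction with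
    | base => intro _; rwa [one_mul]
    | succ k hk ih =>
      exact fun hkn => h.succ_mul_lt hq hqm hqb hm h2m (by linarith) hkn (ih (by linarith))
  have hlast := hlt (n - 1) (by linarith) (by linarith)
  by_contra hne
  have hc2 : 2 ≤ c := by omega
  nlinarith

/-- The first jump of `k ↦ ⌊k m / n⌋` is a jump of one of the two summands; the other summand
then never jumps. -/
theorem eq_one_or_eq_one (h : FloorAdditive n b c m) (hm : 0 < m) (h2m : 2 * m < n)
    (hb : b ∈ Ioo 0 n) (hc : c ∈ Ioo 0 n) : b = 1 ∨ c = 1 := by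
  have hn : 0 < n := by linarith
  set q := (n - 1) / m + 1 with hq
  have hqm : n ≤ q * m := by linarith [Int.lt_ediv_add_one_mul_self (n - 1) hm]
  have hqm' : (q - 1) * m < n := by
    rw [hq, add_sub_cancel_right]
    linarith [Int.ediv_mul_le (n - 1) hm.ne']
  have hq1 : 1 < q := by nlinarith
  by_cases hqb : n ≤ q * b
  · exact .inr (h.right_eq_one hq1 hqm' hqb hm h2m hc.1 hc.2)
  by_cases hqc : n ≤ q * c
  · exact .inl (h.symm.right_eq_one hq1 hqm' hqc hm h2m hb.1 hb.2)
  push Not at hqb hqc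
  by_cases hqn : q < n
  · have hjump : 1 ≤ q * m / n := by rwa [Int.le_ediv_iff_mul_le hn, one_mul]
    rw [← h.mul_ediv_eq hc.1.le (by linarith) hqn hqc, Int.le_ediv_iff_mul_le hn] at hjump
    linarith
  · left
    nlinarith [hb.1]

end FloorAdditive

theorem mul_sub_ediv_of_not_dvd {n a k : ℤ} (hn : 0 < n) (hka : ¬ n ∣ k * a) :
    k * (n - a) / n = k - 1 - k * a / n := by
  have hpos : 0 < k * a % n := Int.emod_pos_of_not_dvd hka |>.resolve_left hn.ne'
  have hlt : k * a % n < n := Int.emod_lt_of_pos _ hn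
  have hsplit := Int.mul_ediv_add_emod (k * a) n
  rw [Int.ediv_eq_iff_of_pos hn]
  constructor <;> linarith

namespace IsTerminalQuadruple

variable {n : ℤ} {u : Fin 4 → ℤ}

theorem comp_perm (h : IsTerminalQuadruple n u) (σ : Equiv.Perm (Fin 4)) :
    IsTerminalQuadruple n (u ∘ σ) := fun k hk =>
  ⟨fun j => (h k hk).1 (σ j), (Equiv.sum_comp σ fun j => k * u j % n).trans (h k hk).2⟩

theorem emod (h : IsTerminalQuadruple n u) : IsTerminalQuadruple n fun j => u j % n := by
  intro k hk
  have hmod : ∀ j, k * (u j % n) % n = k * u j % n := fun j => by simp [Int.mul_emod]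
  simpa only [hmod, Int.dvd_iff_emod_eq_zero] using h k hk

theorem mul_of_isCoprime (h : IsTerminalQuadruple n u) {w : ℤ} (hw : IsCoprime n w) :
    IsTerminalQuadruple n fun j => w * u j := by
  intro k hk
  simpa only [mul_assoc] using h (k * w) fun hkw => hk (hw.dvd_of_dvd_mul_right hkw)

theorem isCoprime (h : IsTerminalQuadruple n u) (hn : n ≠ 0) (j : Fin 4) : IsCoprime (u j) n := by
  rw [Int.isCoprime_iff_gcd_eq_one]
  obtain ⟨k, hk⟩ := Int.gcd_dvd_right (u j) n
  obtain ⟨m, hm⟩ := Int.gcd_dvd_left (u j) n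
  set g := Int.gcd (u j) n
  have hnk : n ∣ k := by
    by_contra hnk
    refine (h k hnk).1 j ⟨m, ?_⟩
    rw [hm, hk]
    ring
  have hk0 : k ≠ 0 := by rintro rfl; simp [hn] at hk
  have hg : (g : ℤ) * k ∣ 1 * k := by rwa [← hk, one_mul]
  exact Nat.dvd_one.1 (by exact_mod_cast (mul_dvd_mul_iff_right hk0).1 hg)

theorem sum_mul_ediv (h : IsTerminalQuadruple n u) (hn : n ≠ 0) (hsum : ∑ j, u j = 2 * n) {k : ℤ}
    (hk : ¬ n ∣ k) : ∑ j, k * u j / n = 2 * k - 2 := by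
  refine mul_left_cancel₀ hn ?_
  have hsplit : n * ∑ j, k * u j / n + ∑ j, k * u j % n = k * ∑ j, u j := by
    rw [Finset.mul_sum, Finset.mul_sum, ← Finset.sum_add_distrib]
    exact Finset.sum_congr rfl fun j _ => Int.mul_ediv_add_emod _ _
  rw [(h k hk).2, hsum] at hsplit
  linarith

theorem sum_eq_two_mul (h : IsTerminalQuadruple n u) (hn : 1 < n) (hu : ∀ j, u j ∈ Ico 0 n) :
    ∑ j, u j = 2 * n := by
  rw [← (h 1 (mt (Int.le_of_dvd one_pos) hn.not_ge)).2]
  refine Finset.sum_congr rfl fun j _ => ?_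
  rw [one_mul, Int.emod_eq_of_lt (hu j).1 (hu j).2]

theorem floorAdditive (h : IsTerminalQuadruple n u) (hn : 1 < n) (hu : ∀ j, u j ∈ Ico 0 n)
    (hlast : u 3 = n - 1) : FloorAdditive n (u 1) (u 2) (n - u 0) := by
  intro k hk hkn
  have hn0 : 0 < n := by linarith
  have hndvd : ¬ n ∣ k := mt (Int.le_of_dvd hk) hkn.not_ge
  have hsum := h.sum_mul_ediv hn0.ne' (h.sum_eq_two_mul hn hu) hndvd
  have hlast_floor : k * (n - 1) / n = k - 1 := by
    rw [mul_sub_ediv_of_not_dvd hn0 (by rwa [mul_one]), mul_one,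
      Int.ediv_eq_zero_of_lt hk.le hkn, sub_zero]
  rw [Fin.sum_univ_four, hlast, hlast_floor] at hsum
  rw [mul_sub_ediv_of_not_dvd hn0 ((h k hndvd).1 0)]
  linarith

theorem exists_lt_two_mul (h : IsTerminalQuadruple n u) (hn : 2 < n) (hu : ∀ j, u j ∈ Ico 0 n)
    (hlast : u 3 = n - 1) : ∃ p ≠ 3, n < 2 * u p := by
  have hndvd : ¬ n ∣ 2 := mt (Int.le_of_dvd two_pos) hn.not_ge
  by_contra! hsmall
  have hfloor : ∀ p ≠ 3, 2 * u p / n = 0 := fun p hp =>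
    Int.ediv_eq_zero_of_lt (mul_nonneg two_pos.le (hu p).1) <| (hsmall p hp).lt_of_ne fun heq =>
      (h 2 hndvd).1 p heq.symm.dvd
  have hlast_floor : 2 * u 3 / n < 2 := by
    rw [Int.ediv_lt_iff_lt_mul (by linarith)]
    linarith
  have hsum := h.sum_mul_ediv (by linarith) (h.sum_eq_two_mul (by linarith) hu) hndvd
  rw [Fin.sum_univ_four, hfloor 0 (by decide), hfloor 1 (by decide), hfloor 2 (by decide)] at hsum
  linarith

theorem exists_eq_one (h : IsTerminalQuadruple n u) (hn : 1 < n) (hu : ∀ j, u j ∈ Ico 0 n)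
    (hlast : u 3 = n - 1) : ∃ i ≠ 3, u i = 1 := by
  have hpos : ∀ j, u j ∈ Ioo 0 n := fun j => by
    refine ⟨(hu j).1.lt_of_ne fun hzero => ?_, (hu j).2⟩
    exact (h 1 (mt (Int.le_of_dvd one_pos) hn.not_ge)).1 j (by simp [← hzero])
  obtain hn2 | hn2 := (Int.add_one_le_iff.2 hn).eq_or_lt
  · have h0 := hpos 0
    exact ⟨0, by decide, by rw [mem_Ioo] at h0; omega⟩
  obtain ⟨p, hp, hlarge⟩ := h.exists_lt_two_mul hn2 hu hlast
  set σ := Equiv.swap 0 p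
  have hσ3 : σ 3 = 3 := Equiv.swap_apply_of_ne_of_ne (by decide) hp.symm
  have hσ : ∀ i ≠ 3, σ i ≠ 3 := fun i hi hi3 => hi (σ.injective (hi3.trans hσ3.symm))
  have hadd := (h.comp_perm σ).floorAdditive hn (fun j => hu (σ j)) (by simp [hσ3, hlast])
  have hm : (u ∘ σ) 0 = u p := by simp [σ]
  rw [hm] at hadd
  obtain hone | hone := hadd.eq_one_or_eq_one (by linarith [(hu p).2]) (by linarith)
    (hpos (σ 1)) (hpos (σ 2))
  exacts [⟨σ 1, hσ 1 (by decide), hone⟩, ⟨σ 2, hσ 2 (by decide), hone⟩]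

theorem exists_dvd_add (h : IsTerminalQuadruple n u) (hn : 0 < n) :
    ∃ i j, i ≠ j ∧ n ∣ u i + u j := by
  obtain rfl | hn1 := (Int.add_one_le_iff.2 hn).eq_or_lt
  · exact ⟨0, 1, by decide, one_dvd _⟩
  obtain ⟨w, y, hwy⟩ := h.isCoprime hn.ne' 3
  have hw : IsCoprime n (-w) := ⟨y, -u 3, by linarith⟩
  have hmod : ∀ j, -w * u j % n ∈ Ico 0 n := fun j =>
    ⟨Int.emod_nonneg _ hn.ne', Int.emod_lt_of_pos _ hn⟩
  have hlast : -w * u 3 % n = n - 1 := by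
    have heq : -w * u 3 = n - 1 + n * (y - 1) := by linarith
    rw [heq, Int.add_mul_emod_self_left, Int.emod_eq_of_lt (by linarith) (by linarith)]
  obtain ⟨i, hi, hone⟩ := (h.mul_of_isCoprime hw).emod.exists_eq_one hn1 hmod hlast
  refine ⟨i, 3, hi, hw.dvd_of_dvd_mul_left (Int.dvd_of_emod_eq_zero ?_)⟩
  rw [mul_add, Int.add_emod, hone, hlast, add_sub_cancel, Int.emod_self]

end IsTerminalQuadruple

/-! ### Fractional parts and denominators -/

section FractionalParts

variable {R : Type*} [Ring R] [LinearOrder R] [IsStrictOrderedRing R] [FloorRing R]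

theorem fract_add_fract_neg (x : R) :
    Int.fract x + Int.fract (-x) = if Int.fract x ≠ 0 then 1 else 0 := by
  split_ifs with hx
  · rw [Int.fract_neg hx, add_sub_cancel]
  · push Not at hx
    rw [hx, Int.fract_neg_eq_zero.2 hx, add_zero]

theorem sum_fract_add_sum_fract_neg {ι : Type*} [Fintype ι] (t : ι → R) :
    ∑ j, Int.fract (t j) + ∑ j, Int.fract (-t j) = ({j | Int.fract (t j) ≠ 0} : Finset ι).card := by
  rw [← Finset.sum_add_distrib, Finset.sum_congr rfl fun j _ => fract_add_fract_neg (t j),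
    Finset.sum_boole]

theorem exists_natCast_eq_sum_fract {ι : Type*} [Fintype ι] {t : ι → R} (ht : ∑ j, t j = 0) :
    ∃ m : ℕ, ∑ j, Int.fract (t j) = m := by
  have hfloor : ∑ j, Int.fract (t j) = ((-∑ j, ⌊t j⌋ : ℤ) : R) := by
    simp only [Int.fract, Finset.sum_sub_distrib, ht, zero_sub, Int.cast_neg, Int.cast_sum]
  have hnonneg : (0 : R) ≤ ((-∑ j, ⌊t j⌋ : ℤ) : R) :=
    hfloor ▸ Finset.sum_nonneg fun j _ => Int.fract_nonneg _
  obtain ⟨m, hm⟩ := Int.eq_ofNat_of_zero_le (Int.cast_nonneg_iff.1 hnonneg)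
  exact ⟨m, by rw [hfloor, hm, Int.cast_natCast]⟩

/-- The fractional parts of `t` and `-t` sum to natural numbers other than `1` whose total is the
number of nonintegral coordinates, so they are `0, 0` or `2, 2`. -/
theorem fract_eq_zero_or_sum_fract_eq_two {t : Fin 4 → R} (ht : ∑ j, t j = 0)
    (hpos : ∑ j, Int.fract (t j) ≠ 1) (hneg : ∑ j, Int.fract (-t j) ≠ 1) :
    (∀ j, Int.fract (t j) = 0) ∨
      (∀ j, Int.fract (t j) ≠ 0) ∧ ∑ j, Int.fract (t j) = 2 := by
  have htotal := sum_fract_add_sum_fract_neg t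
  have hcard : ({j | Int.fract (t j) ≠ 0} : Finset (Fin 4)).card ≤ 4 := Finset.card_le_univ _
  obtain ⟨m, hm⟩ := exists_natCast_eq_sum_fract ht
  obtain ⟨m', hm'⟩ := exists_natCast_eq_sum_fract (t := fun j => -t j) (by simp [ht])
  have hzero : ∀ s : Fin 4 → R, ∑ j, Int.fract (s j) = 0 → ∀ j, Int.fract (s j) = 0 := fun s hs j =>
    (Finset.sum_eq_zero_iff_of_nonneg fun j _ => Int.fract_nonneg (s j)).1 hs j (Finset.mem_univ j)
  obtain rfl | hm0 := eq_or_ne m 0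
  · exact .inl (hzero t (by rw [hm, Nat.cast_zero]))
  obtain rfl | hm0' := eq_or_ne m' 0
  · exact .inl fun j => Int.fract_neg_eq_zero.1 (hzero _ (by rw [hm', Nat.cast_zero]) j)
  rw [hm, hm', ← Nat.cast_add, Nat.cast_inj] at htotal
  rw [hm, Nat.cast_ne_one] at hpos
  rw [hm', Nat.cast_ne_one] at hneg
  have hfull : ({j | Int.fract (t j) ≠ 0} : Finset (Fin 4)).card = 4 := by omega
  obtain rfl : m = 2 := by omega
  refine .inr ⟨fun j => ?_, by rw [hm, Nat.cast_ofNat]⟩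
  exact Finset.filter_card_eq hfull j (Finset.mem_univ j)

end FractionalParts

theorem fract_intCast_div_eq_zero_iff {K : Type*} [Field K] [LinearOrder K] [IsStrictOrderedRing K]
    [FloorRing K] {n : ℕ} (hn : n ≠ 0) (a : ℤ) : Int.fract ((a : K) / n) = 0 ↔ (n : ℤ) ∣ a := by
  rw [Int.fract_div_intCast_eq_div_intCast_mod, div_eq_zero_iff, Int.cast_eq_zero,
    or_iff_left (Nat.cast_ne_zero.2 hn), Int.dvd_iff_emod_eq_zero]

theorem exists_eq_zmultiples_inv {K : Type*} [Field K] [CharZero K] {H : AddSubgroup K} {N : ℕ}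
    (hN : N ≠ 0) (hle : H ≤ AddSubgroup.zmultiples (N : K)⁻¹) (hone : 1 ∈ H) :
    ∃ n : ℕ, n ≠ 0 ∧ H = AddSubgroup.zmultiples (n : K)⁻¹ := by
  obtain ⟨m, rfl⟩ := (AddSubgroup.le_zmultiples_iff _ _).1 hle
  obtain ⟨k, hk⟩ := AddSubgroup.mem_zmultiples_iff.1 hone
  have hkm : k * m = (N : ℤ) := by
    rw [nsmul_eq_mul, zsmul_eq_mul, ← mul_assoc,
      mul_inv_eq_one₀ (Nat.cast_ne_zero.2 hN)] at hk
    exact_mod_cast hk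
  have hN_eq : N = k.natAbs * m := by
    rw [← Int.natAbs_natCast N, ← hkm, Int.natAbs_mul, Int.natAbs_natCast]
  have hm : (m : K) ≠ 0 := Nat.cast_ne_zero.2 (right_ne_zero_of_mul (hN_eq ▸ hN))
  refine ⟨k.natAbs, left_ne_zero_of_mul (hN_eq ▸ hN), ?_⟩
  rw [hN_eq, Nat.cast_mul, mul_inv_rev, nsmul_eq_mul, mul_inv_cancel_left₀ hm]

/-! ### Barycentric coordinates of lattice vectors -/

section LatticeSimplex

variable {d : ℕ} {v : Fin (d + 1) → Fin d → ℤ}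

/-- The simplex with vertices `v` contains no lattice point besides its vertices. Affine
independence of the vertices is assumed separately. -/
def IsLatticeFree (v : Fin (d + 1) → Fin d → ℤ) : Prop :=
  ∀ x : Fin d → ℤ, castZ x ∈ convexHull ℝ (range fun j => castZ (v j)) → ∃ j, x = v j

/-- The inclusion `castZ` of `ℤ^d` into `ℝ^d` as a `ℤ`-linear map. -/
def castZLinearMap (d : ℕ) : (Fin d → ℤ) →ₗ[ℤ] (Fin d → ℝ) :=
  (Algebra.linearMap ℤ ℝ).compLeft (Fin d)

theorem castZLinearMap_apply (x : Fin d → ℤ) : castZLinearMap d x = castZ x := rfl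

/-- The affine basis of `ℝ^d` formed by the vertices of a nondegenerate lattice simplex; it supplies
barycentric coordinates. -/
def latticeSimplexBasis (hv : AffineIndependent ℝ fun j => castZ (v j)) :
    AffineBasis (Fin (d + 1)) ℝ (Fin d → ℝ) where
  toFun j := castZ (v j)
  ind' := hv
  tot' := by simp [hv.affineSpan_eq_top_iff_card_eq_finrank_add_one]

/-- The linear part of the `j`-th barycentric coordinate, restricted to lattice vectors. It measures
displacements, so these coordinates sum to `0` rather than `1`; a vector lies in the lattice spanned
by the edges exactly when all of them are integers. -/
def latticeCoord (hv : AffineIndependent ℝ fun j => castZ (v j)) (j : Fin (d + 1)) :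
    (Fin d → ℤ) →ₗ[ℤ] ℝ :=
  ((latticeSimplexBasis hv).coord j).linear.restrictScalars ℤ ∘ₗ castZLinearMap d

theorem latticeSimplexBasis_apply (hv : AffineIndependent ℝ fun j => castZ (v j))
    (j : Fin (d + 1)) : latticeSimplexBasis hv j = castZ (v j) := rfl

theorem linearIndependent_vertex_sub (hv : AffineIndependent ℝ fun j => castZ (v j)) :
    LinearIndependent ℤ fun j : {j : Fin (d + 1) // j ≠ 0} => v j - v 0 := by
  refine LinearIndependent.of_comp (castZLinearMap d) ?_
  have hbasis : castZLinearMap d ∘ (fun j : {j : Fin (d + 1) // j ≠ 0} => v j - v 0) =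
      (latticeSimplexBasis hv).basisOf 0 := by
    ext1 j
    rw [AffineBasis.basisOf_apply, latticeSimplexBasis_apply, latticeSimplexBasis_apply,
      vsub_eq_sub, Function.comp_apply, map_sub, castZLinearMap_apply, castZLinearMap_apply]
  rw [hbasis]
  exact ((latticeSimplexBasis hv).basisOf 0).linearIndependent.restrict_scalars' ℤ

variable (hv : AffineIndependent ℝ fun j => castZ (v j))

theorem latticeCoord_apply (x : Fin d → ℤ) (j : Fin (d + 1)) :
    latticeCoord hv j x =
      (latticeSimplexBasis hv).coord j (castZ x) - (latticeSimplexBasis hv).coord j 0 :=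
  congrFun ((latticeSimplexBasis hv).coord j).decomp' (castZ x)

theorem latticeCoord_vertex_sub (i j k : Fin (d + 1)) :
    latticeCoord hv j (v i - v k) = (if j = i then 1 else 0) - if j = k then 1 else 0 := by
  rw [map_sub, latticeCoord_apply, latticeCoord_apply, sub_sub_sub_cancel_right,
    ← latticeSimplexBasis_apply hv, ← latticeSimplexBasis_apply hv, AffineBasis.coord_apply,
    AffineBasis.coord_apply]

theorem sum_latticeCoord (x : Fin d → ℤ) : ∑ j, latticeCoord hv j x = 0 := by
  simp only [latticeCoord_apply, Finset.sum_sub_distrib, AffineBasis.sum_coord_apply_eq_one,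
    sub_self]

theorem sum_latticeCoord_smul (x : Fin d → ℤ) :
    ∑ j, latticeCoord hv j x • castZ (v j) = castZ x := by
  simp only [latticeCoord_apply, sub_smul, Finset.sum_sub_distrib, ← latticeSimplexBasis_apply hv,
    AffineBasis.linear_combination_coord_eq_self, sub_zero]

/-- If the sum were `1`, the fractional parts would be the barycentric coordinates of a lattice
point of the simplex; a vertex has a coordinate equal to `1`. -/
theorem sum_fract_latticeCoord_ne_one (hfree : IsLatticeFree v) (x : Fin d → ℤ) :
    ∑ j, Int.fract (latticeCoord hv j x) ≠ 1 := by
  intro hsum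
  set w := fun j => Int.fract (latticeCoord hv j x)
  have hpoint : castZ (x - ∑ j, ⌊latticeCoord hv j x⌋ • v j) = ∑ j, w j • castZ (v j) := by
    simp only [w, Int.fract, sub_smul, Finset.sum_sub_distrib, sum_latticeCoord_smul]
    simp only [← castZLinearMap_apply, map_sub, map_sum, map_smul, Int.cast_smul_eq_zsmul]
  have hmem : ∑ j, w j • castZ (v j) ∈ convexHull ℝ (range fun j => castZ (v j)) :=
    (convex_convexHull ℝ _).sum_mem (fun j _ => Int.fract_nonneg _) hsum
      fun j _ => subset_convexHull ℝ _ ⟨j, rfl⟩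
  obtain ⟨i, hi⟩ := hfree _ (hpoint ▸ hmem)
  have hcoord : (latticeSimplexBasis hv).coord i (latticeSimplexBasis hv i) = w i := by
    rw [latticeSimplexBasis_apply, ← hi, hpoint,
      ← (latticeSimplexBasis hv).coord_apply_combination_of_mem (Finset.mem_univ i) hsum,
      Finset.affineCombination_eq_linear_combination _ _ _ hsum]
    rfl
  rw [AffineBasis.coord_apply_eq] at hcoord
  exact (Int.fract_lt_one (latticeCoord hv i x)).ne hcoord.symm

theorem exists_latticeCoord_denominator :
    ∃ N : ℕ, N ≠ 0 ∧ ∀ j x, ∃ k : ℤ, N * latticeCoord hv j x = k := by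
  set Λ := Submodule.span ℤ (range fun j : {j : Fin (d + 1) // j ≠ 0} => v j - v 0)
  have hrank : Module.finrank ℤ Λ = Module.finrank ℤ (Fin d → ℤ) := by
    rw [finrank_span_eq_card (linearIndependent_vertex_sub hv)]
    simp
  have : Finite ((Fin d → ℤ) ⧸ Λ.toAddSubgroup) := Λ.finiteQuotientOfFreeOfRankEq hrank
  have hint : ∀ j, Λ ≤ (LinearMap.range (Algebra.linearMap ℤ ℝ)).comap (latticeCoord hv j) := by
    intro j
    rw [Submodule.span_le]
    rintro _ ⟨i, rfl⟩
    refine ⟨(if j = i then 1 else 0) - if j = 0 then 1 else 0, ?_⟩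
    rw [latticeCoord_vertex_sub]
    simp
  refine ⟨Λ.toAddSubgroup.index, AddSubgroup.index_ne_zero_of_finite, fun j x => ?_⟩
  obtain ⟨k, hk⟩ := hint j (Λ.toAddSubgroup.nsmul_index_mem x)
  exact ⟨k, by rw [← nsmul_eq_mul, ← map_nsmul, ← hk]; rfl⟩

theorem exists_range_latticeCoord_eq_zmultiples {j k : Fin (d + 1)} (hjk : j ≠ k) :
    ∃ n : ℕ, n ≠ 0 ∧
      (latticeCoord hv j).toAddMonoidHom.range = AddSubgroup.zmultiples (n : ℝ)⁻¹ := by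
  obtain ⟨N, hN, hden⟩ := exists_latticeCoord_denominator hv
  refine exists_eq_zmultiples_inv hN ?_ ⟨v j - v k, ?_⟩
  · rintro _ ⟨x, rfl⟩
    obtain ⟨m, hm⟩ := hden j x
    refine AddSubgroup.mem_zmultiples_iff.2 ⟨m, ?_⟩
    rw [zsmul_eq_mul, ← hm, mul_comm, inv_mul_cancel_left₀ (Nat.cast_ne_zero.2 hN)]
    rfl
  · exact (latticeCoord_vertex_sub hv j j k).trans (by simp [hjk])

theorem exists_intCoeff_of_fract_eq_zero {ι R : Type*} [Fintype ι] [CommRing R]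
    [LinearOrder R] [IsStrictOrderedRing R] [FloorRing R] (f : (ι → ℤ) →ₗ[ℤ] R)
    (hf : ∀ x, Int.fract (f x) = 0) :
    ∃ φ : ι → ℤ, ∀ x, ((∑ i, φ i * x i : ℤ) : R) = f x := by
  classical
  choose φ hφ using fun i => Int.fract_eq_zero_iff.1 (hf fun j => if i = j then 1 else 0)
  refine ⟨φ, fun x => ?_⟩
  rw [f.pi_apply_eq_sum_univ x, Int.cast_sum]
  refine Finset.sum_congr rfl fun i _ => ?_
  rw [← hφ, zsmul_eq_mul, Int.cast_mul, mul_comm]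

theorem exists_functional_of_fract_sum_eq_zero (s : Finset (Fin (d + 1)))
    (hs : ∀ x, Int.fract (∑ j ∈ s, latticeCoord hv j x) = 0) :
    ∃ (φ : Fin d → ℤ) (a : ℤ), ∀ j, ∑ i, φ i * v j i = a + if j ∈ s then 1 else 0 := by
  obtain ⟨φ, hφ⟩ := exists_intCoeff_of_fract_eq_zero (∑ j ∈ s, latticeCoord hv j)
    fun x => by rw [LinearMap.sum_apply, hs]
  refine ⟨φ, ∑ i, φ i * v 0 i - if 0 ∈ s then 1 else 0, fun j => ?_⟩
  have hdiff : ∑ i, φ i * (v j - v 0) i = (if j ∈ s then 1 else 0) - if 0 ∈ s then 1 else 0 := by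
    rw [← Int.cast_inj (α := ℝ), hφ, LinearMap.sum_apply]
    simp [latticeCoord_vertex_sub]
  simp only [Pi.sub_apply, mul_sub, Finset.sum_sub_distrib] at hdiff
  linarith

end LatticeSimplex

/-! ### Lattice-free tetrahedra -/

section Tetrahedron

variable {v : Fin 4 → Fin 3 → ℤ} (hv : AffineIndependent ℝ fun j => castZ (v j))

theorem fract_latticeCoord_eq_zero_or_sum_eq_two (hfree : IsLatticeFree v) (x : Fin 3 → ℤ) :
    (∀ j, Int.fract (latticeCoord hv j x) = 0) ∨
      (∀ j, Int.fract (latticeCoord hv j x) ≠ 0) ∧ ∑ j, Int.fract (latticeCoord hv j x) = 2 :=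
  fract_eq_zero_or_sum_fract_eq_two (sum_latticeCoord hv x)
    (sum_fract_latticeCoord_ne_one hv hfree x)
    (by simpa only [map_neg] using sum_fract_latticeCoord_ne_one hv hfree (-x))

theorem fract_latticeCoord_eq_zero (hfree : IsLatticeFree v) {x : Fin 3 → ℤ} {i : Fin 4}
    (hi : Int.fract (latticeCoord hv i x) = 0) (j : Fin 4) : Int.fract (latticeCoord hv j x) = 0 :=
  (fract_latticeCoord_eq_zero_or_sum_eq_two hv hfree x).elim (fun h => h j)
    fun h => absurd hi (h.1 i)

theorem isTerminalQuadruple_of_latticeCoord_eq_div (hfree : IsLatticeFree v) {n : ℕ} (hn : n ≠ 0)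
    {x : Fin 3 → ℤ} {u : Fin 4 → ℤ} (hu : ∀ j, latticeCoord hv j x = u j / n) {i : Fin 4}
    (hi : u i = 1) : IsTerminalQuadruple n u := by
  intro k hk
  have hcoord : ∀ j, latticeCoord hv j (k • x) = (k * u j : ℤ) / n := fun j => by
    rw [map_smul, hu, zsmul_eq_mul, Int.cast_mul, mul_div_assoc]
  have hdichotomy := fract_latticeCoord_eq_zero_or_sum_eq_two hv hfree (k • x)
  simp only [hcoord, ne_eq, fract_intCast_div_eq_zero_iff hn] at hdichotomy
  obtain hdvd | ⟨hndvd, hsum⟩ := hdichotomy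
  · exact absurd (by simpa [hi] using hdvd i) hk
  refine ⟨hndvd, ?_⟩
  simp only [Int.fract_div_intCast_eq_div_intCast_mod, ← Finset.sum_div] at hsum
  rw [div_eq_iff (Nat.cast_ne_zero.2 hn)] at hsum
  exact_mod_cast hsum

/-- A coordinate integral at a vector forces all four to be, so `x` agrees modulo the vertex
lattice with the multiple of `g` having the same `0`-th coordinate. -/
theorem exists_generator_mod_vertex_lattice (hfree : IsLatticeFree v) :
    ∃ (n : ℕ) (g : Fin 3 → ℤ) (u : Fin 4 → ℤ), n ≠ 0 ∧ IsTerminalQuadruple n u ∧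
      (∀ j, latticeCoord hv j g = u j / n) ∧
      ∀ x, ∃ m : ℤ, ∀ j, Int.fract (latticeCoord hv j (x - m • g)) = 0 := by
  obtain ⟨n, hn, hrange⟩ := exists_range_latticeCoord_eq_zmultiples hv (j := 0) (k := 1) (by decide)
  have hnR : (n : ℝ) ≠ 0 := Nat.cast_ne_zero.2 hn
  obtain ⟨g, hg : latticeCoord hv 0 g = (n : ℝ)⁻¹⟩ :
      (n : ℝ)⁻¹ ∈ (latticeCoord hv 0).toAddMonoidHom.range := hrange ▸ AddSubgroup.mem_zmultiples _
  have hint : ∀ j, Int.fract (latticeCoord hv j (n • g)) = 0 :=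
    fract_latticeCoord_eq_zero hv hfree (i := 0)
      (by rw [map_nsmul, hg, nsmul_eq_mul, mul_inv_cancel₀ hnR, Int.fract_one])
  choose u hu using fun j => Int.fract_eq_zero_iff.1 (hint j)
  have hcoord : ∀ j, latticeCoord hv j g = u j / n := fun j => by
    rw [hu, map_nsmul, nsmul_eq_mul, mul_div_cancel_left₀ _ hnR]
  have hu0 : u 0 = 1 := by
    have hcoord0 := hcoord 0
    rw [hg, eq_div_iff hnR, inv_mul_cancel₀ hnR] at hcoord0
    exact_mod_cast hcoord0.symm
  refine ⟨n, g, u, hn, isTerminalQuadruple_of_latticeCoord_eq_div hv hfree hn hcoord hu0, hcoord,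
    fun x => ?_⟩
  have hx : latticeCoord hv 0 x ∈ AddSubgroup.zmultiples (n : ℝ)⁻¹ := hrange ▸ ⟨x, rfl⟩
  obtain ⟨m, hm⟩ := AddSubgroup.mem_zmultiples_iff.1 hx
  exact ⟨m, fract_latticeCoord_eq_zero hv hfree (i := 0)
    (by rw [map_sub, map_smul, hg, hm, sub_self, Int.fract_zero])⟩

theorem exists_pair_fract_latticeCoord_add_eq_zero (hfree : IsLatticeFree v) :
    ∃ i j, i ≠ j ∧ ∀ x, Int.fract (latticeCoord hv i x + latticeCoord hv j x) = 0 := by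
  obtain ⟨n, g, u, hn, hterm, hcoord, hgen⟩ := exists_generator_mod_vertex_lattice hv hfree
  obtain ⟨i, j, hij, c, hc⟩ := hterm.exists_dvd_add (by positivity)
  refine ⟨i, j, hij, fun x => ?_⟩
  obtain ⟨m, hm⟩ := hgen x
  choose z hz using fun j => Int.fract_eq_zero_iff.1 (hm j)
  have hx : ∀ j, latticeCoord hv j x = z j + m * (u j / n) := fun j => by
    rw [hz, map_sub, map_smul, hcoord, zsmul_eq_mul, sub_add_cancel]
  have hpair : (u i : ℝ) / n + u j / n = c := by
    rw [← add_div, div_eq_iff (Nat.cast_ne_zero.2 hn), mul_comm]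
    exact_mod_cast hc
  refine Int.fract_eq_zero_iff.2 ⟨z i + z j + m * c, ?_⟩
  rw [hx, hx]
  push_cast
  linear_combination -m * hpair

end Tetrahedron

/-- White's theorem: every lattice-free tetrahedron in `ℝ^3` has width 1. There is an
integer linear functional taking exactly two values, differing by 1, on the vertices. -/
theorem white_lattice_free_tetrahedron_width_one
    (v : Fin 4 → (Fin 3 → ℤ))
    (hAff : AffineIndependent ℝ (fun j => castZ (v j)))
    (hfree : ∀ x : Fin 3 → ℤ,
      castZ x ∈ convexHull ℝ (Set.range (fun j => castZ (v j))) → ∃ j, x = v j) :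
    ∃ (φ : Fin 3 → ℤ) (a : ℤ), φ ≠ 0 ∧
      (∀ j, (∑ i, φ i * v j i) = a ∨ (∑ i, φ i * v j i) = a + 1) ∧
      (∃ j, (∑ i, φ i * v j i) = a) ∧
      (∃ j, (∑ i, φ i * v j i) = a + 1) := by
  obtain ⟨p, q, hpq, hint⟩ := exists_pair_fract_latticeCoord_add_eq_zero hAff hfree
  obtain ⟨φ, a, hφ⟩ := exists_functional_of_fract_sum_eq_zero hAff {p, q} fun x => by
    rw [Finset.sum_pair hpq, hint]
  have hvertex : ∀ p q : Fin 4, ∃ r, r ∉ ({p, q} : Finset (Fin 4)) := by decide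
  obtain ⟨r, hr⟩ := hvertex p q
  have hp : ∑ i, φ i * v p i = a + 1 := by rw [hφ, if_pos (Finset.mem_insert_self p {q})]
  have hr : ∑ i, φ i * v r i = a := by rw [hφ, if_neg hr, add_zero]
  refine ⟨φ, a, ?_, fun j => ?_, ⟨r, hr⟩, ⟨p, hp⟩⟩
  · rintro rfl
    simp only [Pi.zero_apply, zero_mul, Finset.sum_const_zero] at hp hr
    omega
  · rw [hφ]
    split_ifs <;> simp
end
end

section
/- Let T = ℝ^k/ℤ^k and let S ⊆ T be a closed subset satisfying nS ⊆ S for all natural numbers n ≥ 1. Then S is a finite union of closed subgroups of T. -/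
open Set

noncomputable section

/-! For `x ∈ S` the closure of the forward orbit `{n • x}` is, by compactness, the closed subgroup
generated by `x`, and it lies in `S`. So `S` is the union of the closed subgroups it contains, and
these form a compact set in the Vietoris topology. On the torus every closed subgroup `H` has a
Vietoris neighbourhood consisting of subgroups of `H`: by Fourier duality `H` is cut out by the
characters trivial on it, finitely many of these suffice because `ℤ^d` is Noetherian, and a
character that is close to `1` on a whole subgroup is trivial there. Hence finitely many of the
closed subgroups in `S` contain all the others. -/

open Filter Topology MeasureTheory TopologicalSpace UnitAddTorus
open scoped Pointwise Real

section CompactSubgroups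

variable {G : Type*} [AddGroup G] [TopologicalSpace G]

/-- The Vietoris topology on subgroups, inherited from the one on subsets. -/
local instance vietorisAddSubgroup : TopologicalSpace (AddSubgroup G) :=
  .induced (↑) (.vietoris G)

/-- Every closed subgroup `H` has a neighbourhood such that all subgroups contained in it are
contained in `H`. When `G` is compact and commutative, this says that no quotient of `G` by a
closed subgroup has arbitrarily small nontrivial subgroups. -/
def HereditarilyNoSmallSubgroups (G : Type*) [AddGroup G] [TopologicalSpace G] : Prop :=
  ∀ H : AddSubgroup G, IsClosed (H : Set G) →
    ∃ U ∈ 𝓝ˢ (H : Set G), ∀ K : AddSubgroup G, (K : Set G) ⊆ U → K ≤ H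

theorem HereditarilyNoSmallSubgroups.Iic_mem_nhds (hG : HereditarilyNoSmallSubgroups G)
    {H : AddSubgroup G} (hH : IsClosed (H : Set G)) : Iic H ∈ 𝓝 H := by
  obtain ⟨U, hU, hUH⟩ := hG H hH
  obtain ⟨V, hV, hHV, hVU⟩ := mem_nhdsSet_iff_exists.1 hU
  let := TopologicalSpace.vietoris G
  have hopen : IsOpen {K : AddSubgroup G | (K : Set G) ⊆ V} :=
    hV.powerset_vietoris.preimage continuous_induced_dom
  filter_upwards [hopen.mem_nhds hHV] with K hK using hUH K (hK.trans hVU)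

variable [IsTopologicalAddGroup G]

/-- The set of differences `C - C`. -/
def differenceCompacts (C : NonemptyCompacts G) : NonemptyCompacts G :=
  (C ×ˢ C).map (fun p : G × G ↦ p.1 - p.2) continuous_sub

theorem continuous_differenceCompacts :
    Continuous (differenceCompacts : NonemptyCompacts G → NonemptyCompacts G) :=
  continuous_sub.nonemptyCompacts_map.comp
    (NonemptyCompacts.continuous_prod.comp (continuous_id.prodMk continuous_id))

theorem coe_differenceCompacts (C : NonemptyCompacts G) :
    (differenceCompacts C : Set G) = C - C := by
  rw [differenceCompacts, NonemptyCompacts.coe_map, NonemptyCompacts.coe_prod, sub_image_prod]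

theorem differenceCompacts_eq_self_iff {C : NonemptyCompacts G} :
    differenceCompacts C = C ↔ ∃ H : AddSubgroup G, (H : Set G) = C := by
  rw [← SetLike.coe_set_eq, coe_differenceCompacts]
  constructor
  · intro hC
    refine ⟨.ofSub C C.nonempty fun a ha b hb ↦ ?_, rfl⟩
    rw [← sub_eq_add_neg, ← hC]
    exact sub_mem_sub ha hb
  · rintro ⟨H, hH⟩
    rw [← hH, coe_sub_coe]

theorem isCompact_setOf_isCompact_addSubgroup_subset [T2Space G] {S : Set G} (hS : IsCompact S) :
    IsCompact {H : AddSubgroup G | IsCompact (H : Set G) ∧ (H : Set G) ⊆ S} := by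
  let := TopologicalSpace.vietoris G
  have hfix : IsClosed {C : NonemptyCompacts G | differenceCompacts C = C} :=
    isClosed_eq continuous_differenceCompacts continuous_id
  have hcompact := ((NonemptyCompacts.isCompact_subsets_of_isCompact hS).inter_right hfix).image
    NonemptyCompacts.continuous_coe
  have hind : IsInducing ((↑) : AddSubgroup G → Set G) := ⟨rfl⟩
  rw [hind.isCompact_iff]
  convert hcompact using 1
  ext A
  constructor
  · rintro ⟨H, ⟨hH, hHS⟩, rfl⟩
    exact ⟨⟨⟨H, hH⟩, ⟨0, H.zero_mem⟩⟩, ⟨hHS, differenceCompacts_eq_self_iff.2 ⟨H, rfl⟩⟩, rfl⟩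
  · rintro ⟨C, ⟨hCS, hC⟩, rfl⟩
    obtain ⟨H, hH⟩ := differenceCompacts_eq_self_iff.1 hC
    exact ⟨H, ⟨hH ▸ C.isCompact, hH ▸ hCS⟩, hH⟩

theorem HereditarilyNoSmallSubgroups.exists_finset_forall_le [T2Space G]
    (hG : HereditarilyNoSmallSubgroups G) {S : Set G} (hS : IsCompact S) :
    ∃ 𝒢 : Finset (AddSubgroup G), (∀ H ∈ 𝒢, IsCompact (H : Set G) ∧ (H : Set G) ⊆ S) ∧
      ∀ K : AddSubgroup G, IsCompact (K : Set G) → (K : Set G) ⊆ S → ∃ H ∈ 𝒢, K ≤ H := by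
  obtain ⟨𝒢, h𝒢, hcover⟩ := (isCompact_setOf_isCompact_addSubgroup_subset hS).elim_nhds_subcover
    Iic fun H hH ↦ hG.Iic_mem_nhds hH.1.isClosed
  exact ⟨𝒢, h𝒢, fun K hK hKS ↦ by simpa using hcover ⟨hK, hKS⟩⟩

end CompactSubgroups

section OrbitClosure

variable {G : Type*} [AddGroup G] [TopologicalSpace G] [IsTopologicalAddGroup G] [CompactSpace G]

theorem topologicalClosure_zmultiples_subset {S : Set G} (hS : IsClosed S) {x : G}
    (hx : ∀ᶠ n : ℕ in atTop, n • x ∈ S) :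
    ((AddSubgroup.zmultiples x).topologicalClosure : Set G) ⊆ S := fun _ hy ↦
  hS.mem_of_mapClusterPt
    (mapClusterPt_atTop_nsmul_iff_mem_topologicalClosure_zmultiples.2 hy) hx

theorem lawrence_closed_multiplication_stable_general [T2Space G]
    (hG : HereditarilyNoSmallSubgroups G) {S : Set G} (hS : IsClosed S)
    (hmul : ∀ x ∈ S, ∀ᶠ n : ℕ in atTop, n • x ∈ S) :
    ∃ 𝒢 : Finset (AddSubgroup G), (∀ H ∈ 𝒢, IsClosed (H : Set G)) ∧
      S = ⋃ H ∈ 𝒢, (H : Set G) := by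
  obtain ⟨𝒢, h𝒢, hmax⟩ := hG.exists_finset_forall_le hS.isCompact
  refine ⟨𝒢, fun H hH ↦ (h𝒢 H hH).1.isClosed,
    Subset.antisymm (fun x hx ↦ ?_) (iUnion₂_subset fun H hH ↦ (h𝒢 H hH).2)⟩
  obtain ⟨H, hH, hle⟩ := hmax (AddSubgroup.zmultiples x).topologicalClosure
    (AddSubgroup.isClosed_topologicalClosure _).isCompact
    (topologicalClosure_zmultiples_subset hS (hmul x hx))
  exact mem_iUnion₂_of_mem hH
    (hle (AddSubgroup.le_topologicalClosure _ (AddSubgroup.mem_zmultiples x)))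

end OrbitClosure

theorem integral_eq_zero_of_add_left_eq_mul {G 𝕜 : Type*} [AddGroup G] [MeasurableSpace G]
    [MeasurableAdd G] [RCLike 𝕜] {μ : Measure G} [μ.IsAddLeftInvariant] {f : G → 𝕜} {g : G} {c : 𝕜}
    (hc : c ≠ 1) (hf : ∀ x, f (g + x) = c * f x) : ∫ x, f x ∂μ = 0 := by
  have hinv : c * ∫ x, f x ∂μ = ∫ x, f x ∂μ := by
    rw [← integral_const_mul, ← integral_add_left_eq_self f g]
    simp only [hf]
  exact eq_zero_of_mul_eq_self_left hc hinv

section TorusDuality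

variable {d : Type*} [Fintype d]

theorem mFourier_eq_toCircle (n : d → ℤ) (x : UnitAddTorus d) :
    mFourier n x = AddCircle.toCircle (Fintype.linearCombination ℤ x n) := by
  have hsum : AddCircle.toCircle (∑ i, n i • x i) = ∏ i, AddCircle.toCircle (n i • x i) :=
    map_sum AddCircle.toCircle_addChar.toAddMonoidHom _ _
  rw [Fintype.linearCombination_apply, hsum]
  simp only [mFourier, ContinuousMap.coe_mk, fourier_apply]
  exact (map_prod Circle.coeHom _ _).symm

theorem mFourier_apply_add (n : d → ℤ) (x y : UnitAddTorus d) :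
    mFourier n (x + y) = mFourier n x * mFourier n y := by
  simp [mFourier, fourier_apply, smul_add, AddCircle.toCircle_add, Finset.prod_mul_distrib]

theorem mFourier_apply_eq_one_iff {n : d → ℤ} {x : UnitAddTorus d} :
    mFourier n x = 1 ↔ Fintype.linearCombination ℤ x n = 0 := by
  rw [mFourier_eq_toCircle, Circle.coe_eq_one, ← AddCircle.toCircle_zero (T := 1),
    (AddCircle.injective_toCircle one_ne_zero).eq_iff]

theorem mFourier_apply_eq_one_of_forall_nsmul_mem_centeredArc {n : d → ℤ} {x : UnitAddTorus d}
    (h : ∀ m : ℕ,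
      (Fintype.linearCombination ℤ (m • x) n).toCircle ∈ Circle.centeredArc (π / 2)) :
    mFourier n x = 1 := by
  have hsmul (m : ℕ) :
      Fintype.linearCombination ℤ (m • x) n = m • Fintype.linearCombination ℤ x n := by
    simp only [Fintype.linearCombination_apply, Pi.smul_apply, Finset.smul_sum, smul_comm m]
  simp only [hsmul, AddCircle.toCircle_nsmul] at h
  rw [mFourier_eq_toCircle, Circle.coe_eq_one]
  exact Circle.eq_one_of_forall_pow_mem_centeredArc_pi_div_two fun m _ ↦ h m

/-- The annihilator of a set `A` of points of the torus in its dual group `ℤ^d`: the frequencies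
whose character `mFourier n` is trivial on `A`. -/
def torusAnnihilator (A : Set (UnitAddTorus d)) : Submodule ℤ (d → ℤ) :=
  ⨅ x ∈ A, (Fintype.linearCombination ℤ x).ker

theorem mem_torusAnnihilator {A : Set (UnitAddTorus d)} {n : d → ℤ} :
    n ∈ torusAnnihilator A ↔ ∀ x ∈ A, mFourier n x = 1 := by
  simp [torusAnnihilator, mFourier_apply_eq_one_iff]

theorem ext_of_integral_mFourier_eq {μ ν : Measure (UnitAddTorus d)} [IsFiniteMeasure μ]
    [IsFiniteMeasure ν] (h : ∀ n : d → ℤ, ∫ x, mFourier n x ∂μ = ∫ x, mFourier n x ∂ν) :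
    μ = ν := by
  have hint (ρ : Measure (UnitAddTorus d)) [IsFiniteMeasure ρ] (f : C(UnitAddTorus d, ℂ)) :
      Integrable f ρ :=
    f.continuous.integrable_of_hasCompactSupport (.of_compactSpace f)
  have hspan (f : C(UnitAddTorus d, ℂ)) (hf : f ∈ mFourierSubalgebra d) :
      ∫ x, f x ∂μ = ∫ x, f x ∂ν := by
    replace hf : f ∈ Submodule.span ℂ (range mFourier) := by
      rwa [← mFourierSubalgebra_coe]
    induction hf using Submodule.span_induction with
    | mem f hf => obtain ⟨n, rfl⟩ := hf; exact h n
    | zero => simp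
    | add f g _ _ hf hg =>
      simp only [ContinuousMap.add_apply]
      rw [integral_add (hint μ f) (hint μ g), integral_add (hint ν f) (hint ν g), hf, hg]
    | smul c f _ hf =>
      simp only [ContinuousMap.smul_apply, integral_smul, hf]
  refine ext_of_forall_mem_subalgebra_integral_eq_of_pseudoEMetric_complete_countable
    (A := (mFourierSubalgebra d).comap (BoundedContinuousFunction.toContinuousMapStarₐ ℂ))
    ?_ fun g hg ↦ hspan _ hg
  intro x y hxy
  obtain ⟨_, ⟨f, hf, rfl⟩, hfxy⟩ := mFourierSubalgebra_separatesPoints hxy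
  exact ⟨f, ⟨f, ⟨.mkOfCompact f, hf, rfl⟩, rfl⟩, hfxy⟩

theorem integral_mFourier_map_add {H : AddSubgroup (UnitAddTorus d)} (μ : Measure H)
    (x : UnitAddTorus d) (n : d → ℤ) :
    ∫ y, mFourier n y ∂(μ.map fun h : H ↦ x + (h : UnitAddTorus d)) =
      mFourier n x * ∫ h : H, mFourier n (h : UnitAddTorus d) ∂μ := by
  rw [integral_map (by fun_prop) (by fun_prop), ← integral_const_mul]
  simp only [mFourier_apply_add]

theorem mem_of_torusAnnihilator_le {H : AddSubgroup (UnitAddTorus d)}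
    (hH : IsClosed (H : Set (UnitAddTorus d))) {x : UnitAddTorus d}
    (hx : torusAnnihilator (H : Set (UnitAddTorus d)) ≤ torusAnnihilator {x}) : x ∈ H := by
  have : CompactSpace H := isCompact_iff_compactSpace.1 hH.isCompact
  let μ : Measure H := Measure.addHaarMeasure ⊤
  let translate (y : UnitAddTorus d) (h : H) : UnitAddTorus d := y + h
  have htranslate (y : UnitAddTorus d) : Measurable (translate y) := by fun_prop
  -- The Haar measures of the cosets `x + H` and `H` have the same Fourier coefficients.
  have hcoset : μ.map (translate x) = μ.map (translate 0) := by
    refine ext_of_integral_mFourier_eq fun n ↦ ?_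
    rw [integral_mFourier_map_add, integral_mFourier_map_add]
    by_cases hn : n ∈ torusAnnihilator (H : Set (UnitAddTorus d))
    · rw [mem_torusAnnihilator.1 (hx hn) x rfl, mem_torusAnnihilator.1 hn 0 H.zero_mem]
    · simp only [mem_torusAnnihilator, not_forall] at hn
      obtain ⟨g, hg, hng⟩ := hn
      have hzero : ∫ h : H, mFourier n (h : UnitAddTorus d) ∂μ = 0 :=
        integral_eq_zero_of_add_left_eq_mul (g := (⟨g, hg⟩ : H)) hng
          fun h ↦ mFourier_apply_add n g h
      rw [hzero, mul_zero, mul_zero]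
  have hpos : μ (translate x ⁻¹' H) ≠ 0 := by
    rw [← Measure.map_apply (htranslate x) hH.measurableSet, hcoset,
      Measure.map_apply (htranslate 0) hH.measurableSet]
    have huniv : translate 0 ⁻¹' (H : Set (UnitAddTorus d)) = univ := by
      ext h
      simp [translate]
    rw [huniv]
    exact NeZero.ne _
  obtain ⟨h, hxh⟩ := nonempty_of_measure_ne_zero hpos
  exact (H.add_mem_cancel_right h.2).1 hxh

end TorusDuality

theorem hereditarilyNoSmallSubgroups_unitAddTorus {d : Type*} [Finite d] :
    HereditarilyNoSmallSubgroups (UnitAddTorus d) := by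
  intro H hH
  cases nonempty_fintype d
  obtain ⟨s, hs⟩ := IsNoetherian.noetherian (torusAnnihilator (H : Set (UnitAddTorus d)))
  let U : Set (UnitAddTorus d) := ⋂ n ∈ s,
    (fun x ↦ (Fintype.linearCombination ℤ x n).toCircle) ⁻¹' Circle.centeredArc (π / 2)
  have hU : IsOpen U := isOpen_biInter_finset fun n _ ↦
    (Circle.isOpen_centeredArc _).preimage <| AddCircle.continuous_toCircle.comp <| by
      simp only [Fintype.linearCombination_apply]
      fun_prop
  have hHU : (H : Set (UnitAddTorus d)) ⊆ U := fun x hx ↦ mem_iInter₂.2 fun n hn ↦ by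
    have hnx : mFourier n x = 1 :=
      mem_torusAnnihilator.1 (hs ▸ Submodule.subset_span hn) x hx
    rw [mem_preimage, mFourier_apply_eq_one_iff.1 hnx, AddCircle.toCircle_zero,
      Circle.mem_centeredArc (by linarith [Real.pi_pos])]
    simp [Real.pi_pos]
  refine ⟨U, hU.mem_nhdsSet.2 hHU, fun K hKU x hx ↦ mem_of_torusAnnihilator_le hH ?_⟩
  rw [← hs, Submodule.span_le]
  intro n hn
  rw [SetLike.mem_coe, mem_torusAnnihilator]
  rintro _ rfl
  exact mFourier_apply_eq_one_of_forall_nsmul_mem_centeredArc fun m ↦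
    mem_iInter₂.1 (hKU (K.nsmul_mem hx m)) n hn

/-- Lawrence's theorem (weak form): a closed subset `S` of the torus `T^k = ℝ^k/ℤ^k`
with `nS ⊆ S` for all `n ≥ 1` is a finite union of closed subgroups. -/
theorem lawrence_closed_multiplication_stable (k : ℕ)
    (S : Set (Fin k → AddCircle (1 : ℝ))) (hS : IsClosed S)
    (hmul : ∀ n : ℕ, 1 ≤ n → (fun x => n • x) '' S ⊆ S) :
    ∃ 𝒢 : Finset (AddSubgroup (Fin k → AddCircle (1 : ℝ))),
      (∀ G ∈ 𝒢, IsClosed (G : Set (Fin k → AddCircle (1 : ℝ)))) ∧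
      S = ⋃ G ∈ 𝒢, (G : Set (Fin k → AddCircle (1 : ℝ))) :=
  lawrence_closed_multiplication_stable_general hereditarilyNoSmallSubgroups_unitAddTorus hS
    fun x hx ↦ (eventually_ge_atTop 1).mono fun n hn ↦ hmul n hn ⟨x, hx, rfl⟩
end
end

section
/- Let T be a compact abelian Lie group (e.g., a closed subgroup of a torus) and let U be an open subset of T. Among all closed subgroups of T disjoint from U, there are only finitely many maximal ones with respect to inclusion. -/
open Set

noncomputable section

/-!
The closed subgroups of a compact group that miss the open set `U` form a compact subset of the
hyperspace of compact subsets, with the Vietoris topology. In the torus every closed subgroup `L` is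
cut out by finitely many characters, because a subgroup of `ℤᵈ` is finitely generated; since a
nontrivial subgroup of the circle does not stay close to `1`, every subgroup contained in a small
neighbourhood of `L` is contained in `L`. The subgroups in such a neighbourhood form a Vietoris open
set, so by compactness finitely many closed subgroups `L₁, …, Lₖ` missing `U` dominate all the
others. For a subgroup `T` of the torus the same holds for the intersections `Lᵢ ∩ T`, and a maximal
subgroup must be one of them.
-/

open MeasureTheory TopologicalSpace UnitAddTorus

section Hyperspace

variable {G : Type*} [AddGroup G] [TopologicalSpace G]

theorem isClosed_setOf_exists_addSubgroup_coe_eq [IsTopologicalAddGroup G] [T2Space G] :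
    IsClosed {C : Compacts G | ∃ L : AddSubgroup G, (L : Set G) = C} := by
  have isClosed_zero_mem : IsClosed {C : Compacts G | (0 : G) ∈ C} := by
    simpa using Compacts.isClosed_inter_nonempty_of_isClosed (isClosed_singleton (x := (0 : G)))
  have isClosed_sub_mem : IsClosed {C : Compacts G | ∀ x ∈ C, ∀ y ∈ C, x - y ∈ C} := by
    have hsub : Continuous fun p : G × G ↦ p.1 - p.2 := continuous_sub
    let diff (C : Compacts G) : Compacts G := (C ×ˢ C).map _ hsub
    have hdiff : Continuous diff :=
      hsub.compacts_map.comp (Compacts.continuous_prod.comp (continuous_id.prodMk continuous_id))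
    convert isClosed_eq (hdiff.sup continuous_id) continuous_id using 1
    ext C
    have hdiff_le : diff C ≤ C ↔ ∀ x ∈ C, ∀ y ∈ C, x - y ∈ C := by
      rw [← SetLike.coe_subset_coe, Compacts.coe_map, Compacts.coe_prod, image_subset_iff]
      exact forall_prod_set
    exact hdiff_le.symm.trans sup_eq_right.symm
  convert isClosed_zero_mem.inter isClosed_sub_mem using 1
  ext C
  constructor
  · rintro ⟨L, hL⟩
    simp only [mem_inter_iff, mem_ofPred_eq, ← SetLike.mem_coe, ← hL]
    exact ⟨L.zero_mem, fun x hx y hy ↦ L.sub_mem hx hy⟩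
  · rintro ⟨h₀, hsub⟩
    exact ⟨.ofSub C ⟨0, h₀⟩ fun x hx y hy ↦ sub_eq_add_neg x y ▸ hsub x hx y hy, rfl⟩

/-- A subgroup `L` of a topological group is *locally greatest* if it is the greatest among the
subgroups contained in some open neighbourhood of `L`. For `L = 0` this says that the group has no
small subgroups. -/
def IsLocallyGreatest (L : AddSubgroup G) : Prop :=
  ∃ N : Set G, IsOpen N ∧ IsGreatest {K : AddSubgroup G | (K : Set G) ⊆ N} L

theorem exists_finite_closed_addSubgroup_forall_disjoint_le [IsTopologicalAddGroup G] [T2Space G]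
    [CompactSpace G] (hG : ∀ L : AddSubgroup G, IsClosed (L : Set G) → IsLocallyGreatest L)
    {U : Set G} (hU : IsOpen U) :
    ∃ F : Set (AddSubgroup G), F.Finite ∧
      (∀ M ∈ F, IsClosed (M : Set G) ∧ Disjoint (M : Set G) U) ∧
      ∀ K : AddSubgroup G, Disjoint (K : Set G) U → ∃ M ∈ F, K ≤ M := by
  let ι := {L : AddSubgroup G // IsClosed (L : Set G) ∧ Disjoint (L : Set G) U}
  choose N hN_open hN_greatest using fun L : ι ↦ hG L L.2.1
  have hcompact : IsCompact ({C : Compacts G | ∃ L : AddSubgroup G, (L : Set G) = C} ∩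
      {C : Compacts G | (C : Set G) ⊆ Uᶜ}) :=
    (isClosed_setOf_exists_addSubgroup_coe_eq.inter
      (Compacts.isClosed_subsets_of_isClosed hU.isClosed_compl)).isCompact
  obtain ⟨t, ht⟩ := hcompact.elim_finite_subcover (fun L ↦ {C : Compacts G | (C : Set G) ⊆ N L})
    (fun L ↦ Compacts.isOpen_subsets_of_isOpen (hN_open L)) (by
      rintro C ⟨⟨L, hL⟩, hCU⟩
      let L₀ : ι := ⟨L, hL ▸ C.isCompact.isClosed, hL ▸ disjoint_left.2 hCU⟩
      exact mem_iUnion.2 ⟨L₀, hL.symm.subset.trans (hN_greatest L₀).1⟩)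
  refine ⟨Subtype.val '' (t : Set ι), t.finite_toSet.image _, ?_, fun K hK ↦ ?_⟩
  · rintro _ ⟨L, -, rfl⟩
    exact L.2
  · let C : Compacts G := ⟨K.topologicalClosure, K.isClosed_topologicalClosure.isCompact⟩
    have hCU : (C : Set G) ⊆ Uᶜ :=
      closure_minimal (disjoint_left.1 hK) hU.isClosed_compl
    obtain ⟨L, hLt, hCL⟩ := mem_iUnion₂.1 (ht ⟨⟨K.topologicalClosure, rfl⟩, hCU⟩)
    exact ⟨L, mem_image_of_mem _ hLt,
      (hN_greatest L).2 (subset_closure.trans hCL)⟩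

theorem finite_setOf_maximal_of_isInducing [IsTopologicalAddGroup G] [T2Space G] [CompactSpace G]
    (hG : ∀ L : AddSubgroup G, IsClosed (L : Set G) → IsLocallyGreatest L)
    {A : Type*} [AddGroup A] [TopologicalSpace A] {f : A →+ G} (hf : Topology.IsInducing f)
    {U : Set A} (hU : IsOpen U) :
    {L : AddSubgroup A |
      Maximal (fun K : AddSubgroup A ↦ IsClosed (K : Set A) ∧ Disjoint (K : Set A) U) L
    }.Finite := by
  obtain ⟨V, hV, rfl⟩ := hf.isOpen_iff.1 hU
  obtain ⟨F, hF, hF_disjoint, hF_dominating⟩ :=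
    exists_finite_closed_addSubgroup_forall_disjoint_le hG hV
  refine (hF.image (AddSubgroup.comap f)).subset fun L ⟨⟨_, hL_disjoint⟩, hL_max⟩ ↦ ?_
  have hmap_disjoint : Disjoint (L.map f : Set G) V := by
    rwa [AddSubgroup.coe_map, disjoint_image_left]
  obtain ⟨M, hMF, hLM⟩ := hF_dominating (L.map f) hmap_disjoint
  obtain ⟨hM_closed, hM_disjoint⟩ := hF_disjoint M hMF
  have hle : L ≤ M.comap f := AddSubgroup.map_le_iff_le_comap.1 hLM
  have hge : M.comap f ≤ L :=
    hL_max ⟨hM_closed.preimage hf.continuous, hM_disjoint.preimage f⟩ hle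
  exact ⟨M, hMF, hge.antisymm hle⟩

end Hyperspace

section Characters

theorem eq_one_of_forall_norm_pow_sub_one_le {A : Type*} [NormedRing A] [NormedAlgebra ℝ A]
    {a : A} {c : ℝ} (hc : c < 1) (ha : ∀ k : ℕ, ‖a ^ k - 1‖ ≤ c) : a = 1 := by
  let M := ⨆ k : ℕ, ‖a ^ k - 1‖
  have hle (k : ℕ) : ‖a ^ k - 1‖ ≤ M := le_ciSup ⟨c, forall_mem_range.2 ha⟩ k
  have hM : 0 ≤ M := (norm_nonneg _).trans (hle 0)
  have hdouble (k : ℕ) : 2 * ‖a ^ k - 1‖ ≤ M + M * c := calc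
    2 * ‖a ^ k - 1‖ = ‖(2 : ℝ) • (a ^ k - 1)‖ := by simp [norm_smul]
    _ = ‖(a ^ (k * 2) - 1) - (a ^ k - 1) * (a ^ k - 1)‖ := by
      rw [two_smul, pow_mul, sq]; congr 1; noncomm_ring
    _ ≤ ‖a ^ (k * 2) - 1‖ + ‖a ^ k - 1‖ * ‖a ^ k - 1‖ :=
      (norm_sub_le _ _).trans (by gcongr; exact norm_mul_le _ _)
    _ ≤ M + M * c := by gcongr <;> first | exact hle _ | exact ha _
  have hM_le : M ≤ (M + M * c) / 2 := ciSup_le fun k ↦ by linarith [hdouble k]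
  have hM_zero : M ≤ 0 := by nlinarith
  simpa [sub_eq_zero] using (hle 1).trans hM_zero

theorem integral_addChar_eq_zero {G : Type*} [AddGroup G] [MeasurableSpace G] [MeasurableAdd G]
    (μ : Measure G) [μ.IsAddLeftInvariant] {χ : AddChar G ℂ} {g : G} (hg : χ g ≠ 1) :
    ∫ x, χ x ∂μ = 0 := by
  have h : ∫ x, χ x ∂μ = χ g * ∫ x, χ x ∂μ := by
    simpa only [AddChar.map_add_eq_mul, integral_const_mul] using
      (integral_add_left_eq_self (μ := μ) χ g).symm
  by_contra hne
  exact hg (mul_eq_right₀ hne |>.1 h.symm)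

variable {d : Type*} [Fintype d]

/-- The monomial `mFourier m` as an additive character of the torus. -/
def mFourierAddChar (m : d → ℤ) : AddChar (UnitAddTorus d) ℂ where
  toFun := mFourier m
  map_zero_eq_one' := by simp [mFourier]
  map_add_eq_mul' x y := by
    simp [mFourier, fourier_apply, smul_add, AddCircle.toCircle_add, Finset.prod_mul_distrib]

theorem ext_of_forall_integral_mFourier_eq {μ ν : Measure (UnitAddTorus d)} [IsFiniteMeasure μ]
    [IsFiniteMeasure ν] (h : ∀ m : d → ℤ, ∫ x, mFourier m x ∂μ = ∫ x, mFourier m x ∂ν) :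
    μ = ν := by
  have hintegrable (ρ : Measure (UnitAddTorus d)) [IsFiniteMeasure ρ] (f : C(UnitAddTorus d, ℂ)) :
      Integrable f ρ :=
    f.continuous.integrable_of_hasCompactSupport (.of_compactSpace _)
  have hspan (f) (hf : f ∈ Submodule.span ℂ (range (mFourier (d := d)))) :
      ∫ x, f x ∂μ = ∫ x, f x ∂ν := by
    induction hf using Submodule.span_induction with
    | mem f hf => obtain ⟨m, rfl⟩ := hf; exact h m
    | zero => simp
    | add f g _ _ hf hg => simp [integral_add (hintegrable _ f) (hintegrable _ g), hf, hg]
    | smul c f _ hf => simp [integral_const_mul, hf]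
  let trigPoly := (mFourierSubalgebra d).comap (BoundedContinuousFunction.toContinuousMapStarₐ ℂ)
  refine ext_of_forall_mem_subalgebra_integral_eq_of_polish (A := trigPoly) (fun x y hxy ↦ ?_)
    fun f hf ↦ hspan f.toContinuousMap (mFourierSubalgebra_coe (d := d) ▸ hf)
  obtain ⟨_, ⟨f, hf, rfl⟩, hfxy⟩ := mFourierSubalgebra_separatesPoints hxy
  exact ⟨f, ⟨f, ⟨.mkOfCompact f, hf, rfl⟩, rfl⟩, hfxy⟩

/-- The annihilator of a set of points of the torus in the character lattice `ℤᵈ`. -/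
def annihilator (S : Set (UnitAddTorus d)) : AddSubgroup (d → ℤ) where
  carrier := {m | ∀ x ∈ S, mFourier m x = 1}
  zero_mem' := by simp [mFourier_zero]
  add_mem' hm hm' x hx := by rw [mFourier_add, hm x hx, hm' x hx, one_mul]
  neg_mem' hm x hx := by rw [mFourier_neg, hm x hx, map_one]

theorem mem_annihilator {S : Set (UnitAddTorus d)} {m : d → ℤ} :
    m ∈ annihilator S ↔ ∀ x ∈ S, mFourier m x = 1 :=
  Iff.rfl

theorem map_add_left_eq_self_of_forall_integral_mFourier_eq_zero {μ : Measure (UnitAddTorus d)}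
    [IsFiniteMeasure μ] {x : UnitAddTorus d}
    (h : ∀ m : d → ℤ, mFourier m x ≠ 1 → ∫ y, mFourier m y ∂μ = 0) : μ.map (x + ·) = μ := by
  refine ext_of_forall_integral_mFourier_eq fun m ↦ ?_
  calc ∫ y, mFourier m y ∂μ.map (x + ·)
    _ = ∫ y, mFourier m (x + y) ∂μ := integral_map (by fun_prop) (by fun_prop)
    _ = ∫ y, mFourier m x * mFourier m y ∂μ :=
      integral_congr_ae (.of_forall fun y ↦ (mFourierAddChar m).map_add_eq_mul x y)
    _ = mFourier m x * ∫ y, mFourier m y ∂μ := integral_const_mul _ _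
    _ = ∫ y, mFourier m y ∂μ := by
      by_cases hm : mFourier m x = 1
      · rw [hm, one_mul]
      · rw [h m hm, mul_zero]

-- Translation by `x` preserves the Haar measure of `L`, hence cannot move `L` off itself.
theorem mem_of_annihilator_le {L : AddSubgroup (UnitAddTorus d)}
    (hL : IsClosed (L : Set (UnitAddTorus d))) {x : UnitAddTorus d}
    (hx : annihilator (L : Set (UnitAddTorus d)) ≤ annihilator {x}) : x ∈ L := by
  have : CompactSpace L := isCompact_iff_compactSpace.1 hL.isCompact
  let haar : Measure L := Measure.addHaar
  let μ : Measure (UnitAddTorus d) := haar.map (↑)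
  have hμ : μ.map (x + ·) = μ := by
    refine map_add_left_eq_self_of_forall_integral_mFourier_eq_zero fun m hm ↦ ?_
    obtain ⟨l, hl, hml⟩ : ∃ l ∈ L, mFourier m l ≠ 1 := by
      by_contra! h
      exact hm (mem_annihilator.1 (hx h) x rfl)
    rw [integral_map (by fun_prop) (by fun_prop)]
    exact integral_addChar_eq_zero haar (χ := (mFourierAddChar m).compAddMonoidHom L.subtype)
      (g := ⟨l, hl⟩) hml
  have hμ_apply {s : Set (UnitAddTorus d)} (hs : MeasurableSet s) :
      μ s = haar ((↑) ⁻¹' s) :=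
    Measure.map_apply measurable_subtype_coe hs
  have hx_add : Measurable (x + · : UnitAddTorus d → UnitAddTorus d) := measurable_const_add x
  have hne : haar ((↑) ⁻¹' ((x + ·) ⁻¹' (L : Set (UnitAddTorus d)))) ≠ 0 := by
    rw [← hμ_apply (hx_add hL.measurableSet), ← Measure.map_apply hx_add hL.measurableSet, hμ,
      hμ_apply hL.measurableSet, Subtype.coe_preimage_self]
    exact NeZero.ne _
  obtain ⟨l, hl⟩ := nonempty_of_measure_ne_zero hne
  exact (L.add_mem_cancel_right l.2).1 hl

theorem exists_finset_mem_iff_forall_mFourier_eq_one {L : AddSubgroup (UnitAddTorus d)}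
    (hL : IsClosed (L : Set (UnitAddTorus d))) :
    ∃ s : Finset (d → ℤ), ∀ x, x ∈ L ↔ ∀ m ∈ s, mFourier m x = 1 := by
  let A := annihilator (L : Set (UnitAddTorus d))
  obtain ⟨s, hs⟩ : A.FG := by
    simpa [Submodule.fg_iff_addSubgroup_fg] using
      IsNoetherian.noetherian (AddSubgroup.toIntSubmodule A)
  refine ⟨s, fun x ↦ ⟨fun hx m hm ↦ ?_, fun hx ↦ mem_of_annihilator_le hL ?_⟩⟩
  · have hmA : m ∈ A := hs ▸ AddSubgroup.subset_closure hm
    exact hmA x hx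
  · rw [show annihilator (L : Set (UnitAddTorus d)) = _ from hs.symm, AddSubgroup.closure_le]
    rintro m hm _ rfl
    exact hx m hm

end Characters

theorem isLocallyGreatest_of_isClosed {d : Type*} [Finite d] {L : AddSubgroup (UnitAddTorus d)}
    (hL : IsClosed (L : Set (UnitAddTorus d))) : IsLocallyGreatest L := by
  cases nonempty_fintype d
  obtain ⟨s, hs⟩ := exists_finset_mem_iff_forall_mFourier_eq_one hL
  refine ⟨⋂ m ∈ s, {x | ‖mFourier m x - 1‖ < 1 / 2}, ?_, fun x hx ↦ ?_, fun K hK x hx ↦ ?_⟩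
  · exact isOpen_biInter_finset fun m _ ↦ isOpen_lt (by fun_prop) continuous_const
  · refine mem_iInter₂.2 fun m hm ↦ ?_
    simp [(hs x).1 hx m hm]
  · refine (hs x).2 fun m hm ↦ eq_one_of_forall_norm_pow_sub_one_le one_half_lt_one fun k ↦ ?_
    have hk : mFourier m (k • x) = mFourier m x ^ k := (mFourierAddChar m).map_nsmul_eq_pow k x
    rw [← hk]
    exact (mem_iInter₂.1 (hK (K.nsmul_mem hx k)) m hm).le

theorem lawrence_finitely_many_maximal_subgroups_general {d : Type*} [Finite d] {A : Type*}
    [AddGroup A] [TopologicalSpace A] {f : A →+ UnitAddTorus d} (hf : Topology.IsInducing f)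
    {U : Set A} (hU : IsOpen U) :
    {L : AddSubgroup A |
      Maximal (fun K : AddSubgroup A ↦ IsClosed (K : Set A) ∧ Disjoint (K : Set A) U) L}.Finite :=
  finite_setOf_maximal_of_isInducing (fun _ ↦ isLocallyGreatest_of_isClosed) hf hU

/-- Lawrence's theorem: for a closed subgroup `T` of a finite-dimensional torus and an
open subset `U` of `T`, there are only finitely many maximal closed subgroups of `T`
disjoint from `U`. -/
theorem lawrence_finitely_many_maximal_subgroups (n : ℕ)
    (T : AddSubgroup (Fin n → AddCircle (1 : ℝ)))
    (hT : IsClosed (T : Set (Fin n → AddCircle (1 : ℝ))))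
    (U : Set T) (hU : IsOpen U) :
    {L : AddSubgroup T | IsClosed (L : Set T) ∧ Disjoint (L : Set T) U ∧
      ∀ L' : AddSubgroup T, IsClosed (L' : Set T) → Disjoint (L' : Set T) U →
        L ≤ L' → L' = L}.Finite := by
  refine (lawrence_finitely_many_maximal_subgroups_general (f := T.subtype) .subtypeVal hU).subset
    fun L ⟨hc, hd, hmax⟩ ↦ ?_
  exact ⟨⟨hc, hd⟩, fun L' h hle ↦ (hmax L' h.1 h.2 hle).le⟩
end
end

section
/- For every point x in the open standard simplex Δ = {x ∈ ℝ^k : x_i > 0, Σx_i < 1} that is a torsion point of T^k = ℝ^k/ℤ^k of order > 1 under the quotient map, if the finite cyclic subgroup generated by x meets the (image of the) open simplex only in x itself, then x belongs to a finite set depending only on k. -/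
open Set

noncomputable section

/-- The open standard simplex in `ℝ^k`. -/
def openSimplex (k : ℕ) : Set (Fin k → ℝ) := {x | (∀ i, 0 < x i) ∧ ∑ i, x i < 1}

/-- The quotient map `ℝ^k → T^k = ℝ^k/ℤ^k`. -/
def tor {k : ℕ} (x : Fin k → ℝ) : Fin k → AddCircle (1 : ℝ) := fun i => (x i : AddCircle (1 : ℝ))

/-!
Let `c` be a point of the closed simplex. Recurrence in the compact group `T^k` gives `m ≥ 1` for
which `m • c` is very close to a lattice point `p`. For `x` in the open simplex near `c`, the point
`(m + 1) • x - p` is then again in the open simplex: a facet on which `c` does not lie is too far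
away to be crossed, while the distance to a facet containing `c` is just multiplied by `m + 1`,
because the corresponding integer, being very close to `0`, is `0`. If `x` is isolated, this second
point represents the same class as `x`, so `m • x` is a lattice point. Thus the isolated points near
`c` are `m`-torsion, hence finite in number, and compactness of the closed simplex concludes.
-/

open Filter Topology

section Recurrence

variable {ι : Type*}

theorem exists_pos_nsmul_mem_nhds_zero {G : Type*} [AddGroup G] [TopologicalSpace G]
    [IsTopologicalAddGroup G] [CompactSpace G] (g : G) {U : Set G} (hU : U ∈ 𝓝 0) :
    ∃ m : ℕ, 0 < m ∧ m • g ∈ U := by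
  have hfreq : ∃ᶠ m : ℕ in atTop, m • g ∈ U := (mapClusterPt_zero_atTop_nsmul g).frequently hU
  exact (hfreq.and_eventually (eventually_gt_atTop 0)).exists.imp fun _ h => h.symm

theorem exists_natCast_mul_sub_intCast_mem_nhds_zero (c : ι → ℝ)
    {W : Set (ι → ℝ)} (hW : W ∈ 𝓝 0) :
    ∃ m : ℕ, 0 < m ∧ ∃ p : ι → ℤ, (fun i => m * c i - p i) ∈ W := by
  let π : (ι → ℝ) → ι → UnitAddCircle := Pi.map fun _ t => (t : UnitAddCircle)
  have hπ : IsOpenMap π :=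
    (IsOpenQuotientMap.piMap fun _ => QuotientAddGroup.isOpenQuotientMap_mk).isOpenMap
  obtain ⟨m, hm, w, hw, hwm⟩ := exists_pos_nsmul_mem_nhds_zero (π c) (hπ.image_mem_nhds hW)
  have hlift (i : ι) : ∃ p : ℤ, p • (1 : ℝ) = m * c i - w i := by
    rw [← AddCircle.coe_eq_zero_iff, AddCircle.coe_sub, sub_eq_zero, ← nsmul_eq_mul]
    exact (congrFun hwm i).symm
  choose p hp using hlift
  refine ⟨m, hm, p, ?_⟩
  convert hw using 2 with i
  linarith [hp i, zsmul_one (R := ℝ) (p i)]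

end Recurrence

section Facet

/-- `v` is a harmless perturbation of the nonnegative real `c`, thought of as the distance from a
point of the closed simplex to a facet: adding `v` to a positive `c` does not cross the facet, and
`v` is too small to be a nonzero integer. -/
def IsSmallShift (c v : ℝ) : Prop :=
  |v| < 1 ∧ (0 < c → 0 < c + v)

theorem eventually_isSmallShift (c : ℝ) : ∀ᶠ v in 𝓝 0, IsSmallShift c v := by
  refine .and ?_ ?_
  · exact (continuous_abs.tendsto' 0 0 abs_zero).eventually_lt_const one_pos
  · refine eventually_imp_distrib_left.2 fun hc => ?_
    exact ((continuous_const_add c).tendsto' 0 c (add_zero c)).eventually_const_lt hc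

theorem IsSmallShift.eventually_pos {c : ℝ} (hc : 0 ≤ c) {m : ℕ} {q : ℤ}
    (h : IsSmallShift c (m * c - q)) :
    ∀ᶠ t : ℝ in 𝓝 c, 0 < t → 0 < t + (m * t - q) := by
  obtain rfl | hc := hc.eq_or_lt
  · have hq : q = 0 := by
      have habs : |(q : ℝ)| < 1 := by simpa using h.1
      exact Int.abs_lt_one_iff.1 (mod_cast habs)
    refine .of_forall fun t ht => ?_
    rw [hq, Int.cast_zero, sub_zero]
    positivity
  · have hcont : Continuous fun t : ℝ => t + (m * t - q) := by fun_prop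
    exact (hcont.continuousAt.eventually_const_lt (h.2 hc)).mono fun _ ht _ => ht

end Facet

theorem finite_inter_of_forall_mem_nhds {X : Type*} [TopologicalSpace X] {K S : Set X}
    (hK : IsCompact K) (hS : ∀ c ∈ K, ∃ U ∈ 𝓝 c, (U ∩ S).Finite) : (K ∩ S).Finite := by
  refine hK.induction_on (p := fun s => (s ∩ S).Finite) ?_ ?_ ?_ fun c hc => ?_
  · simp
  · exact fun _ _ hst ht => ht.subset (inter_subset_inter_left _ hst)
  · exact fun _ _ hs ht => by simpa only [union_inter_distrib_right] using hs.union ht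
  · obtain ⟨U, hU, hfin⟩ := hS c hc
    exact ⟨U, mem_nhdsWithin_of_mem_nhds hU, hfin⟩

theorem isCompact_setOf_nonneg_sum_le_one (ι : Type*) [Fintype ι] :
    IsCompact {x : ι → ℝ | (∀ i, 0 ≤ x i) ∧ ∑ i, x i ≤ 1} := by
  refine (isCompact_Icc (a := 0) (b := 1)).of_isClosed_subset ?_ fun x hx => ⟨hx.1, fun i => ?_⟩
  · have hsum : Continuous fun x : ι → ℝ => ∑ i, x i := by fun_prop
    exact isClosed_Ici.inter (isClosed_le hsum continuous_const)
  · exact (Finset.single_le_sum (fun j _ => hx.1 j) (Finset.mem_univ i)).trans hx.2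

section Simplex

variable {k : ℕ}

theorem lt_one_of_mem_openSimplex {x : Fin k → ℝ} (hx : x ∈ openSimplex k) (i : Fin k) :
    x i < 1 :=
  (Finset.single_le_sum (fun j _ => (hx.1 j).le) (Finset.mem_univ i)).trans_lt hx.2

theorem injOn_tor_openSimplex : InjOn tor (openSimplex k) := by
  have hIco {x : Fin k → ℝ} (hx : x ∈ openSimplex k) (i : Fin k) : x i ∈ Ico (0 : ℝ) (0 + 1) :=
    ⟨(hx.1 i).le, by simpa using lt_one_of_mem_openSimplex hx i⟩
  intro x hx y hy hxy
  funext i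
  exact (AddCircle.coe_eq_coe_iff_of_mem_Ico (hIco hx i) (hIco hy i)).1 (congrFun hxy i)

theorem finite_openSimplex_inter_torsion {m : ℕ} (hm : 0 < m) :
    (openSimplex k ∩ {x | m • tor x = 0}).Finite := by
  have htorsion : {u : Fin k → UnitAddCircle | m • u = 0}.Finite :=
    (Finite.pi' fun _ => AddCircle.finite_torsion (1 : ℝ) hm).subset fun _ hu i => congrFun hu i
  exact .of_finite_image (htorsion.subset (by rintro _ ⟨x, hx, rfl⟩; exact hx.2))
    (injOn_tor_openSimplex.mono inter_subset_left)

theorem tor_add_natCast_mul_sub_intCast (x : Fin k → ℝ) (m : ℕ) (p : Fin k → ℤ) :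
    tor (fun i => x i + (m * x i - p i)) = (m + 1) • tor x := by
  funext i
  simp [tor, succ_nsmul', ← nsmul_eq_mul]

/-- The isolated points of the open simplex: those whose natural multiples in `T^k` return to the
open simplex only at the point itself. -/
def isolatedPoints (k : ℕ) : Set (Fin k → ℝ) :=
  {x ∈ openSimplex k |
    (AddSubmonoid.multiples (tor x) : Set (Fin k → AddCircle (1 : ℝ))) ∩ tor '' openSimplex k ⊆
      {tor x}}

theorem nsmul_tor_eq_zero_of_mem_isolatedPoints {x : Fin k → ℝ} (hx : x ∈ isolatedPoints k)
    {m : ℕ} {p : Fin k → ℤ} (hret : (fun i => x i + (m * x i - p i)) ∈ openSimplex k) :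
    m • tor x = 0 := by
  have hmem := mem_image_of_mem tor hret
  rw [tor_add_natCast_mul_sub_intCast] at hmem
  have hback : (m + 1) • tor x = tor x := hx.2 ⟨⟨m + 1, rfl⟩, hmem⟩
  rwa [succ_nsmul, add_eq_right] at hback

theorem exists_eventually_return_mem_openSimplex {c : Fin k → ℝ} (hc : ∀ i, 0 ≤ c i)
    (hc1 : ∑ i, c i ≤ 1) :
    ∃ m : ℕ, 0 < m ∧ ∃ p : Fin k → ℤ, ∀ᶠ x in 𝓝 c, x ∈ openSimplex k →
      (fun i => x i + (m * x i - p i)) ∈ openSimplex k := by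
  have hcoord : ∀ᶠ v : Fin k → ℝ in 𝓝 0, ∀ i, IsSmallShift (c i) (v i) :=
    eventually_all.2 fun i =>
      ((continuous_apply i).tendsto' 0 0 rfl).eventually (eventually_isSmallShift (c i))
  have hslack : ∀ᶠ v : Fin k → ℝ in 𝓝 0, IsSmallShift (1 - ∑ i, c i) (-∑ i, v i) :=
    (Continuous.tendsto' (by fun_prop) 0 0 (by simp)).eventually (eventually_isSmallShift _)
  obtain ⟨m, hm, p, hp, hps⟩ :=
    exists_natCast_mul_sub_intCast_mem_nhds_zero c (hcoord.and hslack)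
  have slack_shift (x : Fin k → ℝ) :
      -∑ i, (m * x i - p i) = m * (1 - ∑ i, x i) - ((m - ∑ i, p i : ℤ) : ℝ) := by
    rw [Finset.sum_sub_distrib, ← Finset.mul_sum]
    push_cast
    ring
  rw [slack_shift] at hps
  have hcoord_pos : ∀ᶠ x : Fin k → ℝ in 𝓝 c, ∀ i, 0 < x i → 0 < x i + (m * x i - p i) :=
    eventually_all.2 fun i => (continuous_apply i).continuousAt.eventually
      ((hp i).eventually_pos (hc i))
  have hslack_cont : Continuous fun x : Fin k → ℝ => 1 - ∑ i, x i := by fun_prop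
  have hslack_pos := hslack_cont.continuousAt.eventually
    (hps.eventually_pos (sub_nonneg.2 hc1))
  refine ⟨m, hm, p, ?_⟩
  filter_upwards [hcoord_pos, hslack_pos] with x hpos hspos hx
  refine ⟨fun i => hpos i (hx.1 i), ?_⟩
  have hlt := hspos (sub_pos.2 hx.2)
  rw [← slack_shift] at hlt
  rw [Finset.sum_add_distrib]
  linarith

theorem exists_mem_nhds_finite_inter_isolatedPoints {c : Fin k → ℝ} (hc : ∀ i, 0 ≤ c i)
    (hc1 : ∑ i, c i ≤ 1) :
    ∃ U ∈ 𝓝 c, (U ∩ isolatedPoints k).Finite := by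
  obtain ⟨m, hm, p, hret⟩ := exists_eventually_return_mem_openSimplex hc hc1
  refine ⟨_, hret, (finite_openSimplex_inter_torsion hm).subset fun x ⟨hxret, hx⟩ => ?_⟩
  exact ⟨hx.1, nsmul_tor_eq_zero_of_mem_isolatedPoints hx (hxret hx.1)⟩

theorem finitely_many_isolated_torsion_points_general (k : ℕ) : (isolatedPoints k).Finite := by
  have hfin := finite_inter_of_forall_mem_nhds (isCompact_setOf_nonneg_sum_le_one (Fin k))
    fun _ hc => exists_mem_nhds_finite_inter_isolatedPoints hc.1 hc.2
  exact hfin.subset fun x hx => ⟨⟨fun i => (hx.1.1 i).le, hx.1.2.le⟩, hx⟩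

end Simplex

/-- Simplex reformulation of Hensley's theorem (case `ε = 1`): there are only finitely
many torsion points `x` of order `> 1` in the open standard simplex whose generated
cyclic subgroup meets the simplex only in `x`. -/
theorem finitely_many_isolated_torsion_points (k : ℕ) :
    ∃ F : Set (Fin k → ℝ), F.Finite ∧
      ∀ x ∈ openSimplex k, 1 < addOrderOf (tor x) →
        ((AddSubgroup.zmultiples (tor x) : Set (Fin k → AddCircle (1 : ℝ))) ∩
          (tor '' openSimplex k) ⊆ {tor x}) →
        x ∈ F :=
  ⟨isolatedPoints k, finitely_many_isolated_torsion_points_general k, fun _ hx _ hiso =>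
    ⟨hx, fun _ hu => hiso ⟨AddSubmonoid.multiples_le.2 (AddSubgroup.mem_zmultiples _) hu.1, hu.2⟩⟩⟩
end
end
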